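/- arXiv:1412.2267 — 3 statements merged into one kernel-verified Lean document; each statement's English description precedes it below -/
import Mathlib

section
/- If a generalized rectangular diagram R' is obtained from a generalized rectangular diagram R by the inverse of an end shift of type L, then R' can be obtained from R by a finite sequence consisting of one end shift of type L, commutations, and one destabilization of type L. -/
namespace RectDiag

/-- A generalized rectangular diagram: a finite subset of `ℝ²`, whose elements are
called the vertices of the diagram. -/
abbrev GRD := Finset (ℝ × ℝ)

/-- Two diagrams are combinatorially equivalent (and hence identified) if one maps onto
the other under `(x, y) ↦ (f x, g y)` for some strictly increasing `f g : ℝ → ℝ`. -/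
def CombEquiv (R R' : GRD) : Prop :=
  ∃ f g : ℝ → ℝ, StrictMono f ∧ StrictMono g ∧
    R' = R.image fun p => (f p.1, g p.2)

/-- Move every vertex on the vertical line `x = a` to the vertical line `x = b`. -/
noncomputable def moveCol (R : GRD) (a b : ℝ) : GRD :=
  R.image fun p => if p.1 = a then (b, p.2) else p

/-- Move every vertex on the horizontal line `y = a` to the horizontal line `y = b`. -/
noncomputable def moveRow (R : GRD) (a b : ℝ) : GRD :=
  R.image fun p => if p.2 = a then (p.1, b) else p

/-- Cyclic permutation: an extreme (rightmost, leftmost, top or bottom) edge is moved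
to the opposite side of the diagram; only the coordinate perpendicular to the edge
changes. -/
def CyclicPermutation (R R' : GRD) : Prop :=
  (∃ a b : ℝ, (∃ p ∈ R, p.1 = a) ∧
    (((∀ p ∈ R, p.1 ≤ a) ∧ ∀ p ∈ R, b < p.1) ∨
     ((∀ p ∈ R, a ≤ p.1) ∧ ∀ p ∈ R, p.1 < b)) ∧
    R' = moveCol R a b) ∨
  (∃ a b : ℝ, (∃ p ∈ R, p.2 = a) ∧
    (((∀ p ∈ R, p.2 ≤ a) ∧ ∀ p ∈ R, b < p.2) ∨
     ((∀ p ∈ R, a ≤ p.2) ∧ ∀ p ∈ R, p.2 < b)) ∧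
    R' = moveRow R a b)

/-- Two sets of reals interleave in the cyclic order: their elements alternate
`a₁ < b₁ < a₂ < b₂` (or with the roles of the two sets exchanged). -/
def Interleave (A B : ℝ → Prop) : Prop :=
  (∃ a₁, A a₁ ∧ ∃ b₁, B b₁ ∧ ∃ a₂, A a₂ ∧ ∃ b₂, B b₂ ∧ a₁ < b₁ ∧ b₁ < a₂ ∧ a₂ < b₂) ∨
  (∃ b₁, B b₁ ∧ ∃ a₁, A a₁ ∧ ∃ b₂, B b₂ ∧ ∃ a₂, A a₂ ∧ b₁ < a₁ ∧ a₁ < b₂ ∧ b₂ < a₂)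

/-- Exchange the vertical lines `x = a` and `x = b` of a diagram. -/
noncomputable def swapCols (R : GRD) (a b : ℝ) : GRD :=
  R.image fun p => if p.1 = a then (b, p.2) else if p.1 = b then (a, p.2) else p

/-- Exchange the horizontal lines `y = a` and `y = b` of a diagram. -/
noncomputable def swapRows (R : GRD) (a b : ℝ) : GRD :=
  R.image fun p => if p.2 = a then (p.1, b) else if p.2 = b then (p.1, a) else p

/-- Commutation: two neighboring parallel edges (no vertex lies strictly between the
two parallel lines containing them) that do not interleave exchange their positions. -/
def Commutation (R R' : GRD) : Prop :=
  (∃ a b : ℝ, a < b ∧ (∃ p ∈ R, p.1 = a) ∧ (∃ p ∈ R, p.1 = b) ∧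
    (∀ p ∈ R, ¬ (a < p.1 ∧ p.1 < b)) ∧
    ¬ Interleave (fun y => (a, y) ∈ R) (fun y => (b, y) ∈ R) ∧
    R' = swapCols R a b) ∨
  (∃ a b : ℝ, a < b ∧ (∃ p ∈ R, p.2 = a) ∧ (∃ p ∈ R, p.2 = b) ∧
    (∀ p ∈ R, ¬ (a < p.2 ∧ p.2 < b)) ∧
    ¬ Interleave (fun x => (x, a) ∈ R) (fun x => (x, b) ∈ R) ∧
    R' = swapRows R a b)

def strictlyBetween (a t b : ℝ) : Prop := (a < t ∧ t < b) ∨ (b < t ∧ t < a)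

/-- Stabilization: a vertex `(x, y)` is replaced by the three other corners of a small
square with corners `(x, y)`, `(x', y)`, `(x, y')`, `(x', y')` (fresh lines `x'`, `y'`,
with no vertex of the diagram strictly between the lines `x, x'` nor between `y, y'`).
The two new short edges (sides of the square through the corner `(x', y')`) emerge from
their common end downward-and-leftward or upward-and-rightward exactly when the square
lies to the upper right or to the lower left of the original vertex (type L,
`typeL = true`); for type N (`typeL = false`) they emerge upward-and-leftward or
downward-and-rightward, i.e. the square lies to the upper left or to the lower right. -/
def Stab (typeL : Bool) (R R' : GRD) : Prop :=
  ∃ x y x' y' : ℝ, (x, y) ∈ R ∧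
    (if typeL then ((x < x' ∧ y < y') ∨ (x' < x ∧ y' < y))
     else ((x' < x ∧ y < y') ∨ (x < x' ∧ y' < y))) ∧
    (∀ p ∈ R, ¬ strictlyBetween x p.1 x') ∧
    (∀ p ∈ R, ¬ strictlyBetween y p.2 y') ∧
    (∀ p ∈ R, p.1 ≠ x') ∧ (∀ p ∈ R, p.2 ≠ y') ∧
    R' = insert (x', y) (insert (x, y') (insert (x', y') (R.erase (x, y))))

/-- End shift.  For adjacent vertices `v₁`, `v₂` on an edge (no vertex of the diagram
between them on the edge), where for type L (`typeL = true`) the vertex `v₂` has the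
greater coordinate along the edge and for type N (`typeL = false`) the smaller one:
either the shifts of `v₁`, `v₂` by `ε > 0` in the positive perpendicular direction are
added and `v₁` is removed, or the shifts by `ε` in the negative perpendicular direction
are added and `v₂` is removed; `ε` is small enough that no vertex of the diagram lies
between (or on) the line through `v₁, v₂` and the line through the shifted vertices. -/
def EndShift (typeL : Bool) (R R' : GRD) : Prop :=
  (∃ a y₁ y₂ ε : ℝ, 0 < ε ∧ y₁ < y₂ ∧ (a, y₁) ∈ R ∧ (a, y₂) ∈ R ∧
    (∀ t : ℝ, (a, t) ∈ R → ¬ (y₁ < t ∧ t < y₂)) ∧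
    (((∀ p ∈ R, ¬ (a < p.1 ∧ p.1 ≤ a + ε)) ∧
       R' = insert (a + ε, y₁) (insert (a + ε, y₂)
         (R.erase (a, if typeL then y₁ else y₂)))) ∨
     ((∀ p ∈ R, ¬ (a - ε ≤ p.1 ∧ p.1 < a)) ∧
       R' = insert (a - ε, y₁) (insert (a - ε, y₂)
         (R.erase (a, if typeL then y₂ else y₁)))))) ∨
  (∃ a x₁ x₂ ε : ℝ, 0 < ε ∧ x₁ < x₂ ∧ (x₁, a) ∈ R ∧ (x₂, a) ∈ R ∧
    (∀ t : ℝ, (t, a) ∈ R → ¬ (x₁ < t ∧ t < x₂)) ∧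
    (((∀ p ∈ R, ¬ (a < p.2 ∧ p.2 ≤ a + ε)) ∧
       R' = insert (x₁, a + ε) (insert (x₂, a + ε)
         (R.erase (if typeL then x₁ else x₂, a)))) ∨
     ((∀ p ∈ R, ¬ (a - ε ≤ p.2 ∧ p.2 < a)) ∧
       R' = insert (x₁, a - ε) (insert (x₂, a - ε)
         (R.erase (if typeL then x₂ else x₁, a))))))

/-- Vertex addition: a new vertex is added on the vertical (respectively horizontal)
line through an existing vertex, provided no vertex of the diagram lies on the
horizontal (respectively vertical) line through the new vertex. -/
def VertexAddition (R R' : GRD) : Prop :=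
  ∃ v : ℝ × ℝ, v ∉ R ∧ R' = insert v R ∧
    (((∃ w ∈ R, w.1 = v.1) ∧ ∀ w ∈ R, w.2 ≠ v.2) ∨
     ((∃ w ∈ R, w.2 = v.2) ∧ ∀ w ∈ R, w.1 ≠ v.1))

/-- An elementary move of type L (`typeL = true`) or N (`typeL = false`): a cyclic
permutation, a commutation, a stabilization or destabilization of the given type, an
end shift of the given type, or a vertex addition. -/
def ElemMove (typeL : Bool) (R R' : GRD) : Prop :=
  CyclicPermutation R R' ∨ Commutation R R' ∨ Stab typeL R R' ∨ Stab typeL R' R ∨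
    EndShift typeL R R' ∨ VertexAddition R R'

/-- One step in a sequence of elementary moves of the given type; since diagrams are
identified up to combinatorial equivalence, combinatorially equivalent diagrams are
also related by a step. -/
def Step (typeL : Bool) (R R' : GRD) : Prop :=
  ElemMove typeL R R' ∨ CombEquiv R R'

/-- In the cyclic order (on `ℝ` closed up into a circle), the elements of `A`, then the
point `u`, then the elements of `B` occur in this cyclic order. -/
def CyclicBetween (A : Finset ℝ) (u : ℝ) (B : Finset ℝ) : Prop :=
  ((∀ a ∈ A, a < u) ∧ (∀ b ∈ B, u < b)) ∨
  ((∀ b ∈ B, u < b) ∧ (∀ a ∈ A, ∀ b ∈ B, b < a)) ∨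
  ((∀ a ∈ A, a < u) ∧ (∀ a ∈ A, ∀ b ∈ B, b < a))

/-- Edge breaking.  The vertices of a horizontal (respectively vertical) edge on the
line `c` are separated into two nonempty parts `S₁`, `S₂`, placed on neighboring lines
`c₁ ≤ c ≤ c₂` (`c₁ < c₂`, with no other vertex of the diagram between the lines `c₁`
and `c₂`), forming edges `e₁` (from `S₁`, on `c₁`) and `e₂` (from `S₂`, on `c₂`, the one
with the greater perpendicular coordinate); the two pieces are joined by a short edge on
a fresh line `u`, which in the cyclic order is greater than the coordinates of the
vertices of `e₂` and smaller than those of `e₁` for type L, and the other way around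
(the roles of `e₁` and `e₂` exchanged) for type N. -/
def EdgeBreaking (typeL : Bool) (R R' : GRD) : Prop :=
  (∃ c c₁ c₂ u : ℝ, ∃ S₁ S₂ : Finset ℝ,
    c₁ < c₂ ∧ c₁ ≤ c ∧ c ≤ c₂ ∧ S₁.Nonempty ∧ S₂.Nonempty ∧ Disjoint S₁ S₂ ∧
    (∀ x : ℝ, (x, c) ∈ R ↔ x ∈ S₁ ∪ S₂) ∧
    (∀ p ∈ R, p.1 ≠ u) ∧
    (∀ p ∈ R, c₁ ≤ p.2 ∧ p.2 ≤ c₂ → p.2 = c) ∧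
    (if typeL then CyclicBetween S₂ u S₁ else CyclicBetween S₁ u S₂) ∧
    R' = ((R.filter fun p => p.2 ≠ c) ∪ S₁.image (fun x => (x, c₁)) ∪
      S₂.image (fun x => (x, c₂)) ∪ {(u, c₁), (u, c₂)})) ∨
  (∃ c c₁ c₂ u : ℝ, ∃ S₁ S₂ : Finset ℝ,
    c₁ < c₂ ∧ c₁ ≤ c ∧ c ≤ c₂ ∧ S₁.Nonempty ∧ S₂.Nonempty ∧ Disjoint S₁ S₂ ∧
    (∀ y : ℝ, (c, y) ∈ R ↔ y ∈ S₁ ∪ S₂) ∧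
    (∀ p ∈ R, p.2 ≠ u) ∧
    (∀ p ∈ R, c₁ ≤ p.1 ∧ p.1 ≤ c₂ → p.1 = c) ∧
    (if typeL then CyclicBetween S₂ u S₁ else CyclicBetween S₁ u S₂) ∧
    R' = ((R.filter fun p => p.1 ≠ c) ∪ S₁.image (fun y => (c₁, y)) ∪
      S₂.image (fun y => (c₂, y)) ∪ {(c₁, u), (c₂, u)}))

/-- `p` lies in the open rectangle `(x₀, x₁) × (y₀, y₁)`. -/
def inRect (x₀ x₁ y₀ y₁ : ℝ) (p : ℝ × ℝ) : Prop :=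
  x₀ < p.1 ∧ p.1 < x₁ ∧ y₀ < p.2 ∧ p.2 < y₁

/-- A flype of type L (in the forward direction): for `x₀ < x₁ < x₂`, `y₀ < y₁ < y₂`,
with rectangles `r_ij = (x_i, x_{i+1}) × (y_j, y_{j+1})`: the rectangle `r₁₁` contains
no vertex; in each of `r₀₁` and `r₁₀`, of any two vertices the right one is higher; and
every vertex `v` in `r₀₀` has a vertex `v₀₁ ∈ r₀₁` with the same `x`-coordinate and a
vertex `v₁₀ ∈ r₁₀` with the same `y`-coordinate.  The move takes each such `v` to the
fourth corner of the rectangle with corners `v`, `v₀₁`, `v₁₀`, all other vertices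
staying fixed. -/
def FlypeLOnce (R R' : GRD) : Prop :=
  ∃ x₀ x₁ x₂ y₀ y₁ y₂ : ℝ, x₀ < x₁ ∧ x₁ < x₂ ∧ y₀ < y₁ ∧ y₁ < y₂ ∧
    (∀ p ∈ R, ¬ inRect x₁ x₂ y₁ y₂ p) ∧
    (∀ p ∈ R, ∀ q ∈ R, inRect x₀ x₁ y₁ y₂ p → inRect x₀ x₁ y₁ y₂ q →
      p.1 < q.1 → p.2 < q.2) ∧
    (∀ p ∈ R, ∀ q ∈ R, inRect x₁ x₂ y₀ y₁ p → inRect x₁ x₂ y₀ y₁ q →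
      p.1 < q.1 → p.2 < q.2) ∧
    ∃ φ : ℝ × ℝ → ℝ × ℝ,
      (∀ p ∈ R, ¬ inRect x₀ x₁ y₀ y₁ p → φ p = p) ∧
      (∀ p ∈ R, inRect x₀ x₁ y₀ y₁ p →
        ∃ q ∈ R, ∃ r ∈ R, inRect x₀ x₁ y₁ y₂ q ∧ q.1 = p.1 ∧
          inRect x₁ x₂ y₀ y₁ r ∧ r.2 = p.2 ∧ φ p = (r.1, q.2)) ∧
      R' = R.image φ

/-- A flype of type L: the move just described or its inverse. -/
def FlypeL (R R' : GRD) : Prop := FlypeLOnce R R' ∨ FlypeLOnce R' R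

/-- A fence diagram: posts are horizontal segments `[l, r] × {y}`, `y ∈ posts` (all
related by a vertical shift); wires are vertical segments recorded as
`(x, bottom level, top level)`, with endpoints interior to posts and no two wires on
the same vertical line. -/
structure Fence where
  posts : Finset ℝ
  l : ℝ
  r : ℝ
  wires : Finset (ℝ × ℝ × ℝ)
  hlr : l < r
  hx : ∀ w ∈ wires, l < w.1 ∧ w.1 < r
  hy : ∀ w ∈ wires, w.2.1 ∈ posts ∧ w.2.2 ∈ posts ∧ w.2.1 < w.2.2
  hinj : ∀ w ∈ wires, ∀ w' ∈ wires, w.1 = w'.1 → w = w'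

/-- Combinatorial equivalence of fence diagrams. -/
def FenceEquiv (F F' : Fence) : Prop :=
  ∃ f g : ℝ → ℝ, StrictMono f ∧ StrictMono g ∧
    F'.l = f F.l ∧ F'.r = f F.r ∧
    F'.posts = F.posts.image g ∧
    F'.wires = F.wires.image fun w => (f w.1, g w.2.1, g w.2.2)

/-- The wire on the vertical line `x` joining the posts at levels `p` and `q`. -/
noncomputable def mkWire (x p q : ℝ) : ℝ × ℝ × ℝ := (x, min p q, max p q)

/-- Twirl: the top (respectively bottom) post is moved to the opposite side, taking
along all wires attached to it. -/
def Twirl (F F' : Fence) : Prop :=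
  F'.l = F.l ∧ F'.r = F.r ∧
  ((∃ t b : ℝ, t ∈ F.posts ∧ (∀ y ∈ F.posts, y ≤ t) ∧ (∀ y ∈ F.posts, b < y) ∧
     F'.posts = insert b (F.posts.erase t) ∧
     F'.wires = F.wires.image fun w => if w.2.2 = t then (w.1, b, w.2.1) else w) ∨
   (∃ t b : ℝ, b ∈ F.posts ∧ (∀ y ∈ F.posts, b ≤ y) ∧ (∀ y ∈ F.posts, y < t) ∧
     F'.posts = insert t (F.posts.erase b) ∧
     F'.wires = F.wires.image fun w => if w.2.1 = b then (w.1, w.2.2, t) else w))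

/-- Turn: the rightmost (respectively leftmost) wire is moved to the opposite side. -/
def Turn (F F' : Fence) : Prop :=
  F'.l = F.l ∧ F'.r = F.r ∧ F'.posts = F.posts ∧
  ((∃ w ∈ F.wires, ∃ x : ℝ, (∀ w' ∈ F.wires, w'.1 ≤ w.1) ∧
     F.l < x ∧ (∀ w' ∈ F.wires, w' ≠ w → x < w'.1) ∧ x < w.1 ∧
     F'.wires = insert (x, w.2) (F.wires.erase w)) ∨
   (∃ w ∈ F.wires, ∃ x : ℝ, (∀ w' ∈ F.wires, w.1 ≤ w'.1) ∧
     x < F.r ∧ (∀ w' ∈ F.wires, w' ≠ w → w'.1 < x) ∧ w.1 < x ∧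
     F'.wires = insert (x, w.2) (F.wires.erase w)))

/-- Two wires interleave if exactly one endpoint level of one lies strictly between the
endpoint levels of the other. -/
def WiresInterleave (w w' : ℝ × ℝ × ℝ) : Prop :=
  (w.2.1 < w'.2.1 ∧ w'.2.1 < w.2.2 ∧ w.2.2 < w'.2.2) ∨
  (w'.2.1 < w.2.1 ∧ w.2.1 < w'.2.2 ∧ w'.2.2 < w.2.2)

/-- Slip: two neighboring non-interleaving wires exchange their horizontal positions. -/
def Slip (F F' : Fence) : Prop :=
  F'.l = F.l ∧ F'.r = F.r ∧ F'.posts = F.posts ∧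
  ∃ w₁ ∈ F.wires, ∃ w₂ ∈ F.wires, w₁.1 < w₂.1 ∧
    (∀ w ∈ F.wires, ¬ (w₁.1 < w.1 ∧ w.1 < w₂.1)) ∧
    ¬ WiresInterleave w₁ w₂ ∧
    F'.wires = insert (w₂.1, w₁.2) (insert (w₁.1, w₂.2) ((F.wires.erase w₁).erase w₂))

/-- `a`, `b`, `c` occur in this cyclic order on `ℝ` closed up into a circle. -/
def CyclicOrd3 (a b c : ℝ) : Prop :=
  (a < b ∧ b < c) ∨ (b < c ∧ c < a) ∨ (c < a ∧ a < b)

/-- Slide: given two neighboring wires, the left joining posts at levels `a` and `b`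
and the right joining posts at levels `a` and `c` with `a < b < c < a` in the cyclic
order, they are replaced by two wires at the same horizontal positions, the left
joining levels `b` and `c` and the right joining levels `b` and `a`. -/
def Slide (F F' : Fence) : Prop :=
  F'.l = F.l ∧ F'.r = F.r ∧ F'.posts = F.posts ∧
  ∃ a b c x₁ x₂ : ℝ, x₁ < x₂ ∧ CyclicOrd3 a b c ∧
    mkWire x₁ a b ∈ F.wires ∧ mkWire x₂ a c ∈ F.wires ∧
    (∀ w ∈ F.wires, ¬ (x₁ < w.1 ∧ w.1 < x₂)) ∧
    F'.wires = insert (mkWire x₁ b c) (insert (mkWire x₂ b a)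
      ((F.wires.erase (mkWire x₁ a b)).erase (mkWire x₂ a c)))

/-- Inflation: a new post is added at a fresh vertical level and joined to some
existing post by one new wire (on a fresh vertical line). -/
def Inflation (F F' : Fence) : Prop :=
  F'.l = F.l ∧ F'.r = F.r ∧
  ∃ n m x : ℝ, n ∉ F.posts ∧ m ∈ F.posts ∧
    F.l < x ∧ x < F.r ∧ (∀ w ∈ F.wires, w.1 ≠ x) ∧
    F'.posts = insert n F.posts ∧
    F'.wires = insert (mkWire x n m) F.wires

/-- A fence move: a twirl, a turn, a slip, a slide, an inflation or a deflation. -/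
def FenceMove (F F' : Fence) : Prop :=
  Twirl F F' ∨ Turn F F' ∨ Slip F F' ∨ Slide F F' ∨ Inflation F F' ∨ Inflation F' F

/-- One step in a sequence of fence moves; combinatorially equivalent fence diagrams
are identified. -/
def FenceStep (F F' : Fence) : Prop := FenceMove F F' ∨ FenceEquiv F F'

/-- `R(F)`: the generalized rectangular diagram whose vertices are the endpoints of
the wires of the fence diagram `F`. -/
noncomputable def fenceToGRD (F : Fence) : GRD :=
  F.wires.image (fun w => (w.1, w.2.1)) ∪ F.wires.image (fun w => (w.1, w.2.2))

/-- Every vertical edge of the diagram contains exactly two vertices. -/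
def VertTwo (R : GRD) : Prop :=
  ∀ a : ℝ, (∃ y : ℝ, (a, y) ∈ R) →
    ∃ y₁ y₂ : ℝ, y₁ < y₂ ∧ ∀ y : ℝ, ((a, y) ∈ R ↔ (y = y₁ ∨ y = y₂))

/-- `F` is a fence diagram `F(R)` of the diagram `R` (each of whose vertical edges is
assumed to contain exactly two vertices): its wires are the vertical edges of `R` and
its posts are horizontal segments at exactly the levels of the horizontal edges of
`R`. -/
def IsFenceOf (R : GRD) (F : Fence) : Prop :=
  F.posts = R.image Prod.snd ∧
  ∀ w : ℝ × ℝ × ℝ,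
    (w ∈ F.wires ↔ ((w.1, w.2.1) ∈ R ∧ (w.1, w.2.2) ∈ R ∧ w.2.1 < w.2.2))

/-!
An end shift of type L that moves `(a, y)` from column `a` to column `b` and adds `(b, z)` is
undone as follows. In the resulting diagram `(a, z)` and `(b, z)` are adjacent on row `z`; a
downward end shift of this pair deletes `(b, z)` and creates `(a, c)` and `(b, c)` just below row
`z`. What is now on `[a, b] × [y, c]` is the original vertex `(a, y)` replaced by the other three
corners of this rectangle. Row `c` contains only `(a, c)` and `(b, c)`, with no vertices in the
columns strictly between, so it commutes past each row above `y`. When no row is left in between,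
the rectangle is a small square and a destabilization restores `(a, y)`. All other orientations,
and type N, are images of this one under transposition and reflections.
-/

section Symmetries

variable {R R' : GRD} {typeL : Bool}

/-- The reflection of a diagram in the diagonal `x = y`; it preserves the type of moves. -/
noncomputable def transpose (R : GRD) : GRD := R.image Prod.swap

/-- The reflection `x ↦ -x` of a diagram; it exchanges the types L and N. -/
noncomputable def reflectX (R : GRD) : GRD := R.image fun p => (-p.1, p.2)

/-- The reflection `y ↦ -y` of a diagram; it exchanges the types L and N. -/
noncomputable def reflectY (R : GRD) : GRD := R.image fun p => (p.1, -p.2)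

@[simp]
theorem mem_transpose {p : ℝ × ℝ} : p ∈ transpose R ↔ p.swap ∈ R := by
  simp [transpose, Prod.ext_iff, and_comm, Prod.swap]

@[simp]
theorem mem_reflectX {p : ℝ × ℝ} : p ∈ reflectX R ↔ (-p.1, p.2) ∈ R := by
  simp [reflectX, Prod.ext_iff, neg_eq_iff_eq_neg]

@[simp]
theorem mem_reflectY {p : ℝ × ℝ} : p ∈ reflectY R ↔ (p.1, -p.2) ∈ R := by
  simp [reflectY, Prod.ext_iff, neg_eq_iff_eq_neg]

theorem forall_mem_transpose {P : ℝ × ℝ → Prop} :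
    (∀ p ∈ transpose R, P p) ↔ ∀ p ∈ R, P p.swap :=
  Finset.forall_mem_image

theorem exists_mem_transpose {P : ℝ × ℝ → Prop} :
    (∃ p ∈ transpose R, P p) ↔ ∃ p ∈ R, P p.swap :=
  Finset.exists_mem_image

theorem forall_mem_reflectX {P : ℝ × ℝ → Prop} :
    (∀ p ∈ reflectX R, P p) ↔ ∀ p ∈ R, P (-p.1, p.2) :=
  Finset.forall_mem_image

theorem exists_mem_reflectX {P : ℝ × ℝ → Prop} :
    (∃ p ∈ reflectX R, P p) ↔ ∃ p ∈ R, P (-p.1, p.2) :=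
  Finset.exists_mem_image

theorem forall_mem_reflectY {P : ℝ × ℝ → Prop} :
    (∀ p ∈ reflectY R, P p) ↔ ∀ p ∈ R, P (p.1, -p.2) :=
  Finset.forall_mem_image

theorem exists_mem_reflectY {P : ℝ × ℝ → Prop} :
    (∃ p ∈ reflectY R, P p) ↔ ∃ p ∈ R, P (p.1, -p.2) :=
  Finset.exists_mem_image

@[simp]
theorem transpose_transpose (R : GRD) : transpose (transpose R) = R := by
  ext; simp

@[simp]
theorem reflectX_reflectX (R : GRD) : reflectX (reflectX R) = R := by
  ext; simp

theorem transpose_inj : transpose R = transpose R' ↔ R = R' :=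
  (Function.LeftInverse.injective transpose_transpose).eq_iff

theorem transpose_reflectX (R : GRD) : transpose (reflectX R) = reflectY (transpose R) := by
  ext; simp

theorem transpose_reflectY (R : GRD) : transpose (reflectY R) = reflectX (transpose R) := by
  ext; simp

theorem transpose_insert (R : GRD) (x y : ℝ) :
    transpose (insert (x, y) R) = insert (y, x) (transpose R) :=
  Finset.image_insert ..

theorem reflectX_insert (R : GRD) (x y : ℝ) :
    reflectX (insert (x, y) R) = insert (-x, y) (reflectX R) :=
  Finset.image_insert ..

theorem reflectY_insert (R : GRD) (x y : ℝ) :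
    reflectY (insert (x, y) R) = insert (x, -y) (reflectY R) :=
  Finset.image_insert ..

theorem transpose_erase (R : GRD) (x y : ℝ) :
    transpose (R.erase (x, y)) = (transpose R).erase (y, x) :=
  Finset.image_erase Prod.swap_injective ..

theorem reflectX_erase (R : GRD) (x y : ℝ) :
    reflectX (R.erase (x, y)) = (reflectX R).erase (-x, y) := by
  ext; simp [Prod.ext_iff, neg_eq_iff_eq_neg]

theorem reflectY_erase (R : GRD) (x y : ℝ) :
    reflectY (R.erase (x, y)) = (reflectY R).erase (x, -y) := by
  ext; simp [Prod.ext_iff, neg_eq_iff_eq_neg]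

theorem CombEquiv.map_transpose (h : CombEquiv R R') :
    CombEquiv (transpose R) (transpose R') := by
  obtain ⟨f, g, hf, hg, rfl⟩ := h
  exact ⟨g, f, hg, hf, by simp only [transpose, Finset.image_image]; rfl⟩

theorem CombEquiv.map_reflectX (h : CombEquiv R R') : CombEquiv (reflectX R) (reflectX R') := by
  obtain ⟨f, g, hf, hg, rfl⟩ := h
  refine ⟨fun x => -f (-x), g, fun _ _ hxy => neg_lt_neg (hf (neg_lt_neg hxy)), hg, ?_⟩
  simp only [reflectX, Finset.image_image, Function.comp_def, neg_neg]

/-- A commutation of two vertical edges. -/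
def ColCommutation (R R' : GRD) : Prop :=
  ∃ a b : ℝ, a < b ∧ (∃ p ∈ R, p.1 = a) ∧ (∃ p ∈ R, p.1 = b) ∧
    (∀ p ∈ R, ¬ (a < p.1 ∧ p.1 < b)) ∧
    ¬ Interleave (fun y => (a, y) ∈ R) (fun y => (b, y) ∈ R) ∧
    R' = swapCols R a b

theorem transpose_swapRows (R : GRD) (a b : ℝ) :
    transpose (swapRows R a b) = swapCols (transpose R) a b := by
  simp only [transpose, swapRows, swapCols, Finset.image_image]
  congr 1
  funext p
  simp only [Function.comp_apply, Prod.fst_swap]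
  split_ifs <;> rfl

theorem reflectX_swapCols {a b : ℝ} (R : GRD) (hab : a ≠ b) :
    reflectX (swapCols R a b) = swapCols (reflectX R) (-b) (-a) := by
  simp only [reflectX, swapCols, Finset.image_image]
  congr 1
  funext p
  by_cases ha : p.1 = a <;> by_cases hb : p.1 = b <;> simp_all

theorem reflectY_swapCols (R : GRD) (a b : ℝ) :
    reflectY (swapCols R a b) = swapCols (reflectY R) a b := by
  simp only [reflectY, swapCols, Finset.image_image]
  congr 1
  funext p
  simp only [Function.comp_apply]
  split_ifs <;> rfl

theorem Interleave.comm {A B : ℝ → Prop} (h : Interleave A B) : Interleave B A :=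
  Or.symm h

theorem Interleave.of_neg {A B : ℝ → Prop}
    (h : Interleave (fun t => A (-t)) (fun t => B (-t))) : Interleave A B := by
  rcases h with ⟨p, hp, q, hq, r, hr, s, hs, hpq, hqr, hrs⟩ |
    ⟨p, hp, q, hq, r, hr, s, hs, hpq, hqr, hrs⟩
  · exact .inr ⟨_, hs, _, hr, _, hq, _, hp, neg_lt_neg hrs, neg_lt_neg hqr, neg_lt_neg hpq⟩
  · exact .inl ⟨_, hs, _, hr, _, hq, _, hp, neg_lt_neg hrs, neg_lt_neg hqr, neg_lt_neg hpq⟩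

theorem commutation_iff :
    Commutation R R' ↔ ColCommutation R R' ∨ ColCommutation (transpose R) (transpose R') := by
  refine or_congr Iff.rfl ?_
  simp only [ColCommutation, exists_mem_transpose, forall_mem_transpose, Prod.fst_swap,
    ← transpose_swapRows, transpose_inj]
  simp only [mem_transpose, Prod.swap_prod_mk]

theorem ColCommutation.map_reflectX (h : ColCommutation R R') :
    ColCommutation (reflectX R) (reflectX R') := by
  obtain ⟨a, b, hab, ha, hb, hgap, hint, rfl⟩ := h
  refine ⟨-b, -a, neg_lt_neg hab, ?_, ?_, ?_, ?_, reflectX_swapCols R hab.ne⟩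
  · simpa only [exists_mem_reflectX, neg_inj] using hb
  · simpa only [exists_mem_reflectX, neg_inj] using ha
  · simpa only [forall_mem_reflectX, neg_lt_neg_iff, and_comm] using hgap
  · simpa only [mem_reflectX, neg_neg] using mt Interleave.comm hint

theorem ColCommutation.map_reflectY (h : ColCommutation R R') :
    ColCommutation (reflectY R) (reflectY R') := by
  obtain ⟨a, b, hab, ha, hb, hgap, hint, rfl⟩ := h
  refine ⟨a, b, hab, ?_, ?_, ?_, ?_, reflectY_swapCols R a b⟩
  · simpa only [exists_mem_reflectY] using ha
  · simpa only [exists_mem_reflectY] using hb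
  · simpa only [forall_mem_reflectY] using hgap
  · simpa only [mem_reflectY] using
      mt (Interleave.of_neg (A := fun y => (a, y) ∈ R) (B := fun y => (b, y) ∈ R)) hint

theorem Commutation.map_transpose (h : Commutation R R') :
    Commutation (transpose R) (transpose R') := by
  rw [commutation_iff] at h ⊢
  simpa only [transpose_transpose] using h.symm

theorem Commutation.map_reflectX (h : Commutation R R') :
    Commutation (reflectX R) (reflectX R') := by
  rw [commutation_iff] at h ⊢
  rw [transpose_reflectX, transpose_reflectX]
  exact h.imp ColCommutation.map_reflectX ColCommutation.map_reflectY

/-- The line through `(x, y)` and `(x', y')` is neither vertical nor horizontal, and its slope is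
positive for type L and negative for type N. -/
def HasSlope (typeL : Bool) (x y x' y' : ℝ) : Prop :=
  if typeL then ((x < x' ∧ y < y') ∨ (x' < x ∧ y' < y))
  else ((x' < x ∧ y < y') ∨ (x < x' ∧ y' < y))

theorem HasSlope.swap {x y x' y' : ℝ} (h : HasSlope typeL x y x' y') :
    HasSlope typeL y x y' x' := by
  cases typeL
  · exact h.symm.imp And.symm And.symm
  · exact h.imp And.symm And.symm

theorem HasSlope.neg_left {x y x' y' : ℝ} (h : HasSlope typeL x y x' y') :
    HasSlope (!typeL) (-x) y (-x') y' := by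
  cases typeL <;> exact h.imp (.imp_left neg_lt_neg) (.imp_left neg_lt_neg)

theorem HasSlope.neg_right {x y x' y' : ℝ} (h : HasSlope typeL x y x' y') :
    HasSlope (!typeL) x (-y) x' (-y') :=
  h.swap.neg_left.swap

theorem strictlyBetween_iff_of_lt {a t b : ℝ} (hab : a < b) :
    strictlyBetween a t b ↔ a < t ∧ t < b :=
  or_iff_left fun h => (h.1.trans h.2).not_gt hab

theorem strictlyBetween_comm {a t b : ℝ} : strictlyBetween a t b ↔ strictlyBetween b t a :=
  or_comm

theorem not_strictlyBetween_and_ne_iff_of_lt {a t b : ℝ} (hab : a < b) :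
    ¬ strictlyBetween a t b ∧ t ≠ b ↔ ¬ (a < t ∧ t ≤ b) := by
  rw [strictlyBetween_iff_of_lt hab]
  grind

theorem not_strictlyBetween_and_ne_iff_of_gt {a t b : ℝ} (hba : b < a) :
    ¬ strictlyBetween a t b ∧ t ≠ b ↔ ¬ (b ≤ t ∧ t < a) := by
  rw [strictlyBetween_comm, strictlyBetween_iff_of_lt hba]
  grind

@[simp]
theorem strictlyBetween_neg {a t b : ℝ} :
    strictlyBetween (-a) (-t) (-b) ↔ strictlyBetween a t b := by
  simp only [strictlyBetween, neg_lt_neg_iff, and_comm, or_comm]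

theorem Stab.map_transpose (h : Stab typeL R R') : Stab typeL (transpose R) (transpose R') := by
  obtain ⟨x, y, x', y', hmem, hslope, hx, hy, hx', hy', rfl⟩ := h
  refine ⟨y, x, y', x', mem_transpose.2 hmem, HasSlope.swap hslope, forall_mem_transpose.2 hy,
    forall_mem_transpose.2 hx, forall_mem_transpose.2 hy', forall_mem_transpose.2 hx', ?_⟩
  simp only [transpose_insert, transpose_erase]
  exact Finset.insert_comm ..

theorem Stab.map_reflectX (h : Stab typeL R R') : Stab (!typeL) (reflectX R) (reflectX R') := by
  obtain ⟨x, y, x', y', hmem, hslope, hx, hy, hx', hy', rfl⟩ := h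
  refine ⟨-x, y, -x', y', by simpa using hmem, HasSlope.neg_left hslope, ?_,
    forall_mem_reflectX.2 hy, ?_, forall_mem_reflectX.2 hy', ?_⟩
  · simpa only [forall_mem_reflectX, strictlyBetween_neg] using hx
  · simpa only [forall_mem_reflectX, ne_eq, neg_inj] using hx'
  · simp only [reflectX_insert, reflectX_erase]

/-- An end shift of either type along the vertical edge on `x = a`: the adjacent vertices `(a, u)`
and `(a, w)` are copied to the fresh neighboring line `x = a'`, and `(a, u)` is removed. Neither the
order of `a` and `a'` nor that of `u` and `w` is prescribed; the type of the shift is the sign of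
the slope from `(a, u)` to `(a', w)`. -/
structure ColShift (R R' : GRD) (a a' u w : ℝ) : Prop where
  removed_mem : (a, u) ∈ R
  kept_mem : (a, w) ∈ R
  adjacent : ∀ t, (a, t) ∈ R → ¬ strictlyBetween u t w
  gap : ∀ p ∈ R, ¬ strictlyBetween a p.1 a' ∧ p.1 ≠ a'
  eq_insert : R' = insert (a', u) (insert (a', w) (R.erase (a, u)))

theorem ColShift.map_reflectX {a a' u w : ℝ} (h : ColShift R R' a a' u w) :
    ColShift (reflectX R) (reflectX R') (-a) (-a') u w where
  removed_mem := by simpa using h.removed_mem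
  kept_mem := by simpa using h.kept_mem
  adjacent := by simpa using h.adjacent
  gap := by simpa only [forall_mem_reflectX, strictlyBetween_neg, ne_eq, neg_inj] using h.gap
  eq_insert := by simp only [h.eq_insert, reflectX_insert, reflectX_erase]

theorem ColShift.map_reflectY {a a' u w : ℝ} (h : ColShift R R' a a' u w) :
    ColShift (reflectY R) (reflectY R') a a' (-u) (-w) where
  removed_mem := by simpa using h.removed_mem
  kept_mem := by simpa using h.kept_mem
  adjacent t ht hbetween := h.adjacent (-t) (by simpa using ht)
    (strictlyBetween_neg.1 (by simpa only [neg_neg] using hbetween))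
  gap := forall_mem_reflectY.2 h.gap
  eq_insert := by simp only [h.eq_insert, reflectY_insert, reflectY_erase]

/-- An end shift along a vertical edge. -/
def ColEndShift (typeL : Bool) (R R' : GRD) : Prop :=
  ∃ a a' u w : ℝ, HasSlope typeL a u a' w ∧ ColShift R R' a a' u w

theorem ColEndShift.map_reflectX (h : ColEndShift typeL R R') :
    ColEndShift (!typeL) (reflectX R) (reflectX R') := by
  obtain ⟨a, a', u, w, hslope, hshift⟩ := h
  exact ⟨-a, -a', u, w, hslope.neg_left, hshift.map_reflectX⟩

theorem ColEndShift.map_reflectY (h : ColEndShift typeL R R') :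
    ColEndShift (!typeL) (reflectY R) (reflectY R') := by
  obtain ⟨a, a', u, w, hslope, hshift⟩ := h
  exact ⟨a, a', -u, -w, hslope.neg_right, hshift.map_reflectY⟩

theorem gap_right_iff {a ε : ℝ} (hε : 0 < ε) :
    (∀ p ∈ R, ¬ (a < p.1 ∧ p.1 ≤ a + ε)) ↔
      ∀ p ∈ R, ¬ strictlyBetween a p.1 (a + ε) ∧ p.1 ≠ a + ε :=
  forall₂_congr fun _ _ => (not_strictlyBetween_and_ne_iff_of_lt (lt_add_of_pos_right a hε)).symm

theorem gap_left_iff {a ε : ℝ} (hε : 0 < ε) :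
    (∀ p ∈ R, ¬ (a - ε ≤ p.1 ∧ p.1 < a)) ↔
      ∀ p ∈ R, ¬ strictlyBetween a p.1 (a - ε) ∧ p.1 ≠ a - ε :=
  forall₂_congr fun _ _ => (not_strictlyBetween_and_ne_iff_of_gt (sub_lt_self a hε)).symm

theorem adjacent_iff_of_lt {a y₁ y₂ : ℝ} (hy : y₁ < y₂) :
    (∀ t, (a, t) ∈ R → ¬ (y₁ < t ∧ t < y₂)) ↔ ∀ t, (a, t) ∈ R → ¬ strictlyBetween y₁ t y₂ :=
  forall₂_congr fun _ _ => not_congr (strictlyBetween_iff_of_lt hy).symm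

theorem adjacent_iff_of_gt {a y₁ y₂ : ℝ} (hy : y₁ < y₂) :
    (∀ t, (a, t) ∈ R → ¬ (y₁ < t ∧ t < y₂)) ↔ ∀ t, (a, t) ∈ R → ¬ strictlyBetween y₂ t y₁ := by
  simp only [adjacent_iff_of_lt hy, strictlyBetween_comm]

theorem colEndShift_iff :
    ColEndShift typeL R R' ↔
      ∃ a y₁ y₂ ε : ℝ, 0 < ε ∧ y₁ < y₂ ∧ (a, y₁) ∈ R ∧ (a, y₂) ∈ R ∧
        (∀ t : ℝ, (a, t) ∈ R → ¬ (y₁ < t ∧ t < y₂)) ∧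
        (((∀ p ∈ R, ¬ (a < p.1 ∧ p.1 ≤ a + ε)) ∧
           R' = insert (a + ε, y₁) (insert (a + ε, y₂)
             (R.erase (a, if typeL then y₁ else y₂)))) ∨
         ((∀ p ∈ R, ¬ (a - ε ≤ p.1 ∧ p.1 < a)) ∧
           R' = insert (a - ε, y₁) (insert (a - ε, y₂)
             (R.erase (a, if typeL then y₂ else y₁))))) := by
  constructor
  · rintro ⟨a, a', u, w, hslope, hu, hw, hadj, hgap, heq⟩
    have right (h : a < a') : ∃ ε > 0, a + ε = a' := ⟨a' - a, sub_pos.2 h, add_sub_cancel a a'⟩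
    have left (h : a' < a) : ∃ ε > 0, a - ε = a' := ⟨a - a', sub_pos.2 h, sub_sub_cancel a a'⟩
    cases typeL <;> rcases hslope with ⟨ha, huw⟩ | ⟨ha, huw⟩
    · obtain ⟨ε, hε, rfl⟩ := left ha
      exact ⟨a, u, w, ε, hε, huw, hu, hw, (adjacent_iff_of_lt huw).2 hadj,
        .inr ⟨(gap_left_iff hε).2 hgap, heq⟩⟩
    · obtain ⟨ε, hε, rfl⟩ := right ha
      exact ⟨a, w, u, ε, hε, huw, hw, hu, (adjacent_iff_of_gt huw).2 hadj,
        .inl ⟨(gap_right_iff hε).2 hgap, heq.trans (Finset.insert_comm ..)⟩⟩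
    · obtain ⟨ε, hε, rfl⟩ := right ha
      exact ⟨a, u, w, ε, hε, huw, hu, hw, (adjacent_iff_of_lt huw).2 hadj,
        .inl ⟨(gap_right_iff hε).2 hgap, heq⟩⟩
    · obtain ⟨ε, hε, rfl⟩ := left ha
      exact ⟨a, w, u, ε, hε, huw, hw, hu, (adjacent_iff_of_gt huw).2 hadj,
        .inr ⟨(gap_left_iff hε).2 hgap, heq.trans (Finset.insert_comm ..)⟩⟩
  · rintro ⟨a, y₁, y₂, ε, hε, hy, h₁, h₂, hadj, ⟨hgap, heq⟩ | ⟨hgap, heq⟩⟩ <;> cases typeL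
    · exact ⟨a, a + ε, y₂, y₁, .inr ⟨lt_add_of_pos_right a hε, hy⟩, h₂, h₁,
        (adjacent_iff_of_gt hy).1 hadj, (gap_right_iff hε).1 hgap,
        heq.trans (Finset.insert_comm ..)⟩
    · exact ⟨a, a + ε, y₁, y₂, .inl ⟨lt_add_of_pos_right a hε, hy⟩, h₁, h₂,
        (adjacent_iff_of_lt hy).1 hadj, (gap_right_iff hε).1 hgap, heq⟩
    · exact ⟨a, a - ε, y₁, y₂, .inl ⟨sub_lt_self a hε, hy⟩, h₁, h₂,
        (adjacent_iff_of_lt hy).1 hadj, (gap_left_iff hε).1 hgap, heq⟩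
    · exact ⟨a, a - ε, y₂, y₁, .inr ⟨sub_lt_self a hε, hy⟩, h₂, h₁,
        (adjacent_iff_of_gt hy).1 hadj, (gap_left_iff hε).1 hgap,
        heq.trans (Finset.insert_comm ..)⟩

theorem endShift_iff :
    EndShift typeL R R' ↔
      ColEndShift typeL R R' ∨ ColEndShift typeL (transpose R) (transpose R') := by
  rw [colEndShift_iff, colEndShift_iff]
  refine or_congr Iff.rfl ?_
  simp only [forall_mem_transpose, Prod.fst_swap, ← transpose_erase, ← transpose_insert,
    transpose_inj]
  simp only [mem_transpose, Prod.swap_prod_mk]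

theorem EndShift.map_transpose (h : EndShift typeL R R') :
    EndShift typeL (transpose R) (transpose R') := by
  rw [endShift_iff] at h ⊢
  simpa only [transpose_transpose] using h.symm

theorem EndShift.map_reflectX (h : EndShift typeL R R') :
    EndShift (!typeL) (reflectX R) (reflectX R') := by
  rw [endShift_iff] at h ⊢
  rw [transpose_reflectX, transpose_reflectX]
  exact h.imp ColEndShift.map_reflectX ColEndShift.map_reflectY

/-- `R'` is obtained from `R` by an end shift, finitely many commutations and a destabilization,
both the end shift and the destabilization being of the given type. -/
def ShiftCommuteDestab (typeL : Bool) (R R' : GRD) : Prop :=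
  ∃ S T U : GRD, EndShift typeL R S ∧ Relation.ReflTransGen Commutation S T ∧
    Stab typeL U T ∧ CombEquiv U R'

theorem ShiftCommuteDestab.map_transpose (h : ShiftCommuteDestab typeL R R') :
    ShiftCommuteDestab typeL (transpose R) (transpose R') := by
  obtain ⟨S, T, U, hS, hST, hT, hU⟩ := h
  exact ⟨transpose S, transpose T, transpose U, hS.map_transpose,
    hST.lift transpose fun _ _ => Commutation.map_transpose, hT.map_transpose, hU.map_transpose⟩

theorem ShiftCommuteDestab.map_reflectX (h : ShiftCommuteDestab typeL R R') :
    ShiftCommuteDestab (!typeL) (reflectX R) (reflectX R') := by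
  obtain ⟨S, T, U, hS, hST, hT, hU⟩ := h
  exact ⟨reflectX S, reflectX T, reflectX U, hS.map_reflectX,
    hST.lift reflectX fun _ _ => Commutation.map_reflectX, hT.map_reflectX, hU.map_reflectX⟩

theorem ShiftCommuteDestab.of_transpose
    (h : ShiftCommuteDestab typeL (transpose R) (transpose R')) :
    ShiftCommuteDestab typeL R R' := by
  simpa only [transpose_transpose] using h.map_transpose

theorem ShiftCommuteDestab.of_reflectX
    (h : ShiftCommuteDestab (!typeL) (reflectX R) (reflectX R')) :
    ShiftCommuteDestab typeL R R' := by
  simpa only [reflectX_reflectX, Bool.not_not] using h.map_reflectX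

theorem ShiftCommuteDestab.of_reflectY
    (h : ShiftCommuteDestab (!typeL) (reflectY R) (reflectY R')) :
    ShiftCommuteDestab typeL R R' := by
  refine .of_transpose (.of_reflectX ?_)
  simpa only [transpose_reflectY] using h.map_transpose

end Symmetries

section RowMoves

theorem exists_Ioo_forall_mem_eq {α : Type*} [LinearOrder α] [TopologicalSpace α] [OrderTopology α]
    [NoMinOrder α] [NoMaxOrder α] (F : Finset α) (d : α) :
    ∃ l u, d ∈ Set.Ioo l u ∧ ∀ t ∈ F, t ∈ Set.Ioo l u → t = d := by
  have hnhds : ((F.erase d : Finset α) : Set α)ᶜ ∈ nhds d :=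
    (F.erase d).finite_toSet.isClosed.compl_mem_nhds (by simp)
  obtain ⟨l, u, hd, hsub⟩ := mem_nhds_iff_exists_Ioo_subset.1 hnhds
  exact ⟨l, u, hd, fun t ht hlu => by simpa [ht] using hsub hlu⟩

/-- Outside `[l, u]` the function is the identity, and on `[l, u]` its graph is the broken line
through `(l, l)`, `(c, d)`, `(u, u)`: the maximum of two lines meeting at `(c, d)`, cut off by the
diagonal. -/
theorem exists_strictMono_map_eq_of_lt {l d c u : ℝ} (hld : l < d) (hdc : d < c) (hcu : c < u) :
    ∃ g : ℝ → ℝ, StrictMono g ∧ g c = d ∧ ∀ t ∉ Set.Ioo l u, g t = t := by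
  have hlc : 0 < c - l := by linarith
  have huc : 0 < u - c := by linarith
  obtain ⟨s, hs, hs₀, hs₁⟩ : ∃ s, (c - l) * s = d - l ∧ 0 < s ∧ s < 1 :=
    ⟨(d - l) / (c - l), mul_div_cancel₀ _ hlc.ne', div_pos (by linarith) hlc,
      (div_lt_one hlc).2 (by linarith)⟩
  obtain ⟨r, hr, hr₁⟩ : ∃ r, (u - c) * r = u - d ∧ 1 < r :=
    ⟨(u - d) / (u - c), mul_div_cancel₀ _ huc.ne', (one_lt_div huc).2 (by linarith)⟩
  refine ⟨fun x => min x (max (l + (x - l) * s) (d + (x - c) * r)), ?_, ?_, ?_⟩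
  · intro x y hxy
    exact min_lt_min hxy (max_lt_max (by gcongr) (by gcongr))
  · simp only [hs, sub_self, zero_mul, add_zero, add_sub_cancel, max_self]
    exact min_eq_right hdc.le
  · intro t ht
    refine min_eq_left (le_max_iff.2 ?_)
    rcases le_or_gt t l with htl | hlt
    · exact .inl (by nlinarith [mul_nonneg (sub_nonneg.2 htl) (sub_nonneg.2 hs₁.le)])
    · have hut : u ≤ t := not_lt.1 fun htu => ht ⟨hlt, htu⟩
      exact .inr (by nlinarith [mul_nonneg (sub_nonneg.2 hut) (sub_nonneg.2 hr₁.le)])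

theorem combEquiv_moveRow {Q : GRD} {d c : ℝ} (hdc : d < c)
    (hgap : ∀ p ∈ Q, p.2 ∉ Set.Ioc d c) : CombEquiv (moveRow Q d c) Q := by
  obtain ⟨l, v, ⟨hld, hdv⟩, hl⟩ := exists_Ioo_forall_mem_eq (Q.image Prod.snd) d
  obtain ⟨k, u, ⟨hkc, hcu⟩, hu⟩ := exists_Ioo_forall_mem_eq (Q.image Prod.snd) c
  obtain ⟨g, hg, hgc, hgt⟩ := exists_strictMono_map_eq_of_lt hld hdc hcu
  have hrow : ∀ p ∈ Q, p.2 ≠ d → p.2 ∉ Set.Ioo l u := by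
    rintro p hp hpd ⟨hlp, hpu⟩
    have hmem : p.2 ∈ Q.image Prod.snd := Finset.mem_image_of_mem _ hp
    rcases lt_or_gt_of_ne hpd with hlt | hgt
    · exact hpd (hl _ hmem ⟨hlp, hlt.trans hdv⟩)
    · have hcp : c < p.2 := not_le.1 fun hpc => hgap p hp ⟨hgt, hpc⟩
      exact hcp.ne' (hu _ hmem ⟨hkc.trans hcp, hpu⟩)
  refine ⟨id, g, strictMono_id, hg, ?_⟩
  conv_lhs => rw [← Finset.image_id (s := Q)]
  rw [moveRow, Finset.image_image]
  refine Finset.image_congr fun p hp => ?_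
  by_cases hpd : p.2 = d
  · simp [hpd, hgc, Prod.ext_iff]
  · simp [hpd, hgt _ (hrow p hp hpd)]

theorem mem_moveRow {Q : GRD} {d c x y : ℝ} :
    (x, y) ∈ moveRow Q d c ↔ ((x, y) ∈ Q ∧ y ≠ d) ∨ (y = c ∧ (x, d) ∈ Q) := by
  simp only [moveRow, Finset.mem_image, Prod.exists]
  grind

theorem mem_swapRows {Q : GRD} {d c x y : ℝ} :
    (x, y) ∈ swapRows Q d c ↔ (x, if y = d then c else if y = c then d else y) ∈ Q := by
  simp only [swapRows, Finset.mem_image, Prod.exists]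
  grind

theorem CombEquiv.refl (Q : GRD) : CombEquiv Q Q :=
  ⟨id, id, strictMono_id, strictMono_id, Finset.image_id.symm⟩

theorem CombEquiv.trans {Q Q' Q'' : GRD} (h : CombEquiv Q Q') (h' : CombEquiv Q' Q'') :
    CombEquiv Q Q'' := by
  obtain ⟨f, g, hf, hg, rfl⟩ := h
  obtain ⟨f', g', hf', hg', rfl⟩ := h'
  exact ⟨f' ∘ f, g' ∘ g, hf'.comp hf, hg'.comp hg, Finset.image_image⟩

theorem not_interleave_of_subset_pair {A B : ℝ → Prop} {a b : ℝ}
    (hA : ∀ t, A t → t ∉ Set.Ioo a b) (hB : ∀ t, B t → t = a ∨ t = b) (hab : a ≤ b) :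
    ¬ Interleave A B := by
  have key {r s t : ℝ} (hr : B r) (hs : A s) (ht : B t) (hrs : r < s) (hst : s < t) : False := by
    rcases hB r hr with rfl | rfl <;> rcases hB t ht with rfl | rfl
    · exact (hrs.trans hst).false
    · exact hA s hs ⟨hrs, hst⟩
    · exact (hrs.trans hst).not_ge hab
    · exact (hrs.trans hst).false
  rintro (⟨-, -, r, hr, s, hs, t, ht, -, hrs, hst⟩ | ⟨r, hr, s, hs, t, ht, -, -, hrs, hst, -⟩) <;>
    exact key hr hs ht hrs hst

end RowMoves

section Rectangles

variable {Q : GRD} {a b c d y : ℝ}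

/-- The rows of `Q` strictly between `y = lo` and `y = hi`. -/
noncomputable def rowsBetween (Q : GRD) (lo hi : ℝ) : Finset ℝ :=
  {t ∈ Q.image Prod.snd | lo < t ∧ t < hi}

theorem mem_rowsBetween {lo hi t : ℝ} :
    t ∈ rowsBetween Q lo hi ↔ (∃ x, (x, t) ∈ Q) ∧ lo < t ∧ t < hi := by
  simp [rowsBetween]

/-- The diagram in which the corner `(a, y)` of the rectangle between the columns `a`, `b` and the
rows `y`, `c` is replaced by the three other corners, as in a stabilization. -/
noncomputable def replaceCorner (Q : GRD) (a b y c : ℝ) : GRD :=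
  insert (b, y) (insert (a, c) (insert (b, c) (Q.erase (a, y))))

theorem mem_replaceCorner {p : ℝ × ℝ} :
    p ∈ replaceCorner Q a b y c ↔
      p = (b, y) ∨ p = (a, c) ∨ p = (b, c) ∨ p ≠ (a, y) ∧ p ∈ Q := by
  simp only [replaceCorner, Finset.mem_insert, Finset.mem_erase]

/-- The vertex `(a, y)` is the lower left corner of a rectangle `[a, b] × [y, c]` whose right and
top sides are on fresh lines. In contrast to the square of a stabilization, rows of `Q` may separate
`y` from `c`. -/
structure IsFreeRectangle (Q : GRD) (a b y c : ℝ) : Prop where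
  left_lt_right : a < b
  bottom_lt_top : y < c
  corner_mem : (a, y) ∈ Q
  col_notMem : ∀ p ∈ Q, p.1 ∉ Set.Ioc a b
  row_ne_top : ∀ p ∈ Q, p.2 ≠ c
  left_side_free : ∀ t ∈ Set.Ioo y c, (a, t) ∉ Q

theorem IsFreeRectangle.stab (h : IsFreeRectangle Q a b y c) (hrows : rowsBetween Q y c = ∅) :
    Stab true Q (replaceCorner Q a b y c) := by
  have hcol : ∀ p ∈ Q, ¬ strictlyBetween a p.1 b ∧ p.1 ≠ b := fun p hp =>
    (not_strictlyBetween_and_ne_iff_of_lt h.left_lt_right).2 (h.col_notMem p hp)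
  refine ⟨a, y, b, c, h.corner_mem, .inl ⟨h.left_lt_right, h.bottom_lt_top⟩,
    fun p hp => (hcol p hp).1, fun p hp hbetween => ?_, fun p hp => (hcol p hp).2,
    h.row_ne_top, rfl⟩
  rw [strictlyBetween_iff_of_lt h.bottom_lt_top] at hbetween
  exact Finset.notMem_empty _ (hrows ▸ mem_rowsBetween.2 ⟨⟨p.1, hp⟩, hbetween⟩)

theorem IsFreeRectangle.map_moveRow (h : IsFreeRectangle Q a b y c) (hd : d ∈ Set.Ioo y c) :
    IsFreeRectangle (moveRow Q d c) a b y d where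
  left_lt_right := h.left_lt_right
  bottom_lt_top := hd.1
  corner_mem := mem_moveRow.2 (.inl ⟨h.corner_mem, hd.1.ne⟩)
  col_notMem := by
    rintro ⟨x, t⟩ hp
    rcases mem_moveRow.1 hp with ⟨hp, -⟩ | ⟨-, hp⟩
    exacts [h.col_notMem _ hp, h.col_notMem (x, d) hp]
  row_ne_top := by
    rintro ⟨x, t⟩ hp
    rcases mem_moveRow.1 hp with ⟨-, htd⟩ | ⟨rfl, -⟩
    exacts [htd, hd.2.ne']
  left_side_free := by
    intro t ht hp
    rcases mem_moveRow.1 hp with ⟨hp, -⟩ | ⟨-, hp⟩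
    exacts [h.left_side_free t ⟨ht.1, ht.2.trans hd.2⟩ hp, h.left_side_free d hd hp]

theorem rowsBetween_moveRow {lo : ℝ} (hdc : d < c) (hgap : ∀ p ∈ Q, p.2 ∉ Set.Ioc d c) :
    rowsBetween (moveRow Q d c) lo d = (rowsBetween Q lo c).erase d := by
  ext t
  simp only [Finset.mem_erase, mem_rowsBetween]
  constructor
  · rintro ⟨⟨x, hx⟩, hlo, htd⟩
    have hxQ : (x, t) ∈ Q := by
      rcases mem_moveRow.1 hx with ⟨hxQ, -⟩ | ⟨rfl, -⟩
      exacts [hxQ, absurd htd hdc.not_gt]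
    exact ⟨htd.ne, ⟨x, hxQ⟩, hlo, htd.trans hdc⟩
  · rintro ⟨htd, ⟨x, hx⟩, hlo, htc⟩
    have hle : t ≤ d := not_lt.1 fun hdt => hgap _ hx ⟨hdt, htc.le⟩
    exact ⟨⟨x, mem_moveRow.2 (.inl ⟨hx, htd⟩)⟩, hlo, lt_of_le_of_ne hle htd⟩

theorem swapRows_replaceCorner (hdc : d ≠ c) (hyd : y ≠ d) (hyc : y ≠ c)
    (hc : ∀ p ∈ Q, p.2 ≠ c) :
    swapRows (replaceCorner Q a b y c) d c = replaceCorner (moveRow Q d c) a b y d := by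
  ext ⟨x, t⟩
  have hxc : (x, c) ∉ Q := fun hx => hc _ hx rfl
  simp only [mem_swapRows, mem_replaceCorner, mem_moveRow, Prod.mk.injEq]
  grind

/-- Rows `d` and `c` do not interleave because row `c` of `replaceCorner Q a b y c` consists of
`(a, c)` and `(b, c)` only, and no vertex lies strictly between the columns `a` and `b`. -/
theorem IsFreeRectangle.commutation (h : IsFreeRectangle Q a b y c)
    (hd : d ∈ rowsBetween Q y c) (hgap : ∀ p ∈ Q, p.2 ∉ Set.Ioc d c) :
    Commutation (replaceCorner Q a b y c) (replaceCorner (moveRow Q d c) a b y d) := by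
  obtain ⟨⟨x, hx⟩, hyd, hdc⟩ := mem_rowsBetween.1 hd
  have mem_row_d {t : ℝ} (ht : (t, d) ∈ replaceCorner Q a b y c) : (t, d) ∈ Q := by
    simpa [mem_replaceCorner, hyd.ne', hdc.ne] using ht
  have mem_row_c {t : ℝ} (ht : (t, c) ∈ replaceCorner Q a b y c) : t = a ∨ t = b := by
    have htc : (t, c) ∉ Q := fun ht => h.row_ne_top _ ht rfl
    simpa [mem_replaceCorner, h.bottom_lt_top.ne', htc] using ht
  refine .inr ⟨d, c, hdc, ⟨(x, d), ?_, rfl⟩, ⟨(a, c), ?_, rfl⟩, ?_, ?_, ?_⟩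
  · exact mem_replaceCorner.2 (.inr (.inr (.inr ⟨by simp [hyd.ne'], hx⟩)))
  · exact mem_replaceCorner.2 (.inr (.inl rfl))
  · rintro p hp ⟨hdp, hpc⟩
    rcases mem_replaceCorner.1 hp with rfl | rfl | rfl | ⟨-, hp⟩
    exacts [hdp.not_gt hyd, hpc.false, hpc.false, hgap p hp ⟨hdp, hpc.le⟩]
  · exact not_interleave_of_subset_pair
      (fun t ht htab => h.col_notMem _ (mem_row_d ht) ⟨htab.1, htab.2.le⟩)
      (fun t => mem_row_c) h.left_lt_right.le
  · exact (swapRows_replaceCorner hdc.ne hyd.ne h.bottom_lt_top.ne h.row_ne_top).symm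

theorem IsFreeRectangle.exists_commutations_stab (h : IsFreeRectangle Q a b y c) :
    ∃ T U : GRD, Relation.ReflTransGen Commutation (replaceCorner Q a b y c) T ∧
      Stab true U T ∧ CombEquiv U Q := by
  induction hs : rowsBetween Q y c using Finset.induction_on_max generalizing Q c with
  | empty => exact ⟨_, Q, .refl, h.stab hs, .refl Q⟩
  | insert d s hmax ih =>
    have hd : d ∈ rowsBetween Q y c := hs ▸ Finset.mem_insert_self d s
    obtain ⟨-, hyd, hdc⟩ := mem_rowsBetween.1 hd
    have hgap : ∀ p ∈ Q, p.2 ∉ Set.Ioc d c := by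
      rintro p hp ⟨hdp, hpc⟩
      have hrow : p.2 ∈ rowsBetween Q y c :=
        mem_rowsBetween.2 ⟨⟨p.1, hp⟩, hyd.trans hdp, lt_of_le_of_ne hpc (h.row_ne_top p hp)⟩
      rw [hs, Finset.mem_insert] at hrow
      exact hrow.elim hdp.ne' fun hps => hdp.not_gt (hmax _ hps)
    have hrows : rowsBetween (moveRow Q d c) y d = s := by
      rw [rowsBetween_moveRow hdc hgap, hs, Finset.erase_insert fun hds => (hmax d hds).false]
    obtain ⟨T, U, hT, hstab, hU⟩ := ih (h.map_moveRow ⟨hyd, hdc⟩) hrows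
    exact ⟨T, U, .head (h.commutation hd hgap) hT, hstab, hU.trans (combEquiv_moveRow hdc hgap)⟩

end Rectangles

section Inversion

variable {R R' : GRD} {a b c y z : ℝ}

theorem ColShift.isFreeRectangle (h : ColShift R' R a b y z) (hab : a < b) (hyc : y < c)
    (hcz : c < z) (hc : ∀ p ∈ R, p.2 ≠ c) : IsFreeRectangle R' a b y c where
  left_lt_right := hab
  bottom_lt_top := hyc
  corner_mem := h.removed_mem
  col_notMem p hp := (not_strictlyBetween_and_ne_iff_of_lt hab).1 (h.gap p hp)
  row_ne_top p hp := by
    by_cases hpy : p = (a, y)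
    · exact hpy ▸ hyc.ne
    · exact hc p (by simp [h.eq_insert, hp, hpy])
  left_side_free t ht hat := h.adjacent t hat (.inl ⟨ht.1, ht.2.trans hcz⟩)

theorem ColShift.rowShift (h : ColShift R' R a b y z) (hyz : y ≠ z)
    (hc : ∀ p ∈ R, ¬ strictlyBetween z p.2 c ∧ p.2 ≠ c) :
    ColShift (transpose R) (transpose (replaceCorner R' a b y c)) z c b a where
  removed_mem := by simp [h.eq_insert]
  kept_mem := by simp [h.eq_insert, h.kept_mem, hyz.symm]
  adjacent t ht := by
    rw [strictlyBetween_comm]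
    simp only [mem_transpose, h.eq_insert, Finset.mem_insert, Finset.mem_erase, Prod.swap_prod_mk,
      Prod.mk.injEq] at ht
    rcases ht with ⟨rfl, -⟩ | ⟨rfl, -⟩ | ⟨-, ht⟩
    · simp [strictlyBetween]
    · simp [strictlyBetween]
    · exact (h.gap _ ht).1
  gap := forall_mem_transpose.2 hc
  eq_insert := by
    have hbz : (b, z) ∉ R'.erase (a, y) := fun hmem =>
      (h.gap _ (Finset.mem_of_mem_erase hmem)).2 rfl
    have herase : R.erase (b, z) = insert (b, y) (R'.erase (a, y)) := by
      rw [h.eq_insert, Finset.erase_insert_of_ne (by simp [hyz]), Finset.erase_insert hbz]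
    rw [← transpose_erase, herase]
    simp only [replaceCorner, transpose_insert]
    rw [Finset.insert_comm, Finset.insert_comm (y, b) (c, b), Finset.insert_comm (c, a)]

theorem ColShift.shiftCommuteDestab_of_lt (h : ColShift R' R a b y z) (hab : a < b) (hyz : y < z) :
    ShiftCommuteDestab true R R' := by
  obtain ⟨l, u, ⟨hlz, hzu⟩, hl⟩ := exists_Ioo_forall_mem_eq (R.image Prod.snd) z
  obtain ⟨c, hc, hcz⟩ := exists_between (max_lt hlz hyz)
  obtain ⟨hlc, hyc⟩ := max_lt_iff.1 hc
  have hgap : ∀ p ∈ R, ¬ strictlyBetween z p.2 c ∧ p.2 ≠ c := fun p hp => by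
    rw [not_strictlyBetween_and_ne_iff_of_gt hcz]
    rintro ⟨hcp, hpz⟩
    exact hpz.ne (hl _ (Finset.mem_image_of_mem _ hp) ⟨hlc.trans_le hcp, hpz.trans hzu⟩)
  obtain ⟨T, U, hT, hstab, hU⟩ :=
    (h.isFreeRectangle hab hyc hcz fun p hp => (hgap p hp).2).exists_commutations_stab
  have hshift : EndShift true R (replaceCorner R' a b y c) :=
    endShift_iff.2 (.inr ⟨z, c, b, a, .inr ⟨hcz, hab⟩, h.rowShift hyz.ne hgap⟩)
  exact ⟨_, T, U, hshift, hT, hstab, hU⟩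

theorem ColEndShift.shiftCommuteDestab {typeL : Bool} (h : ColEndShift typeL R' R) :
    ShiftCommuteDestab typeL R R' := by
  obtain ⟨a, b, y, z, hslope, h⟩ := h
  cases typeL <;> rcases hslope with ⟨hab, hyz⟩ | ⟨hab, hyz⟩
  · exact .of_reflectX (h.map_reflectX.shiftCommuteDestab_of_lt (neg_lt_neg hab) hyz)
  · exact .of_reflectY (h.map_reflectY.shiftCommuteDestab_of_lt hab (neg_lt_neg hyz))
  · exact h.shiftCommuteDestab_of_lt hab hyz
  · exact .of_reflectX (.of_reflectY (h.map_reflectX.map_reflectY.shiftCommuteDestab_of_lt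
      (neg_lt_neg hab) (neg_lt_neg hyz)))

end Inversion

theorem statement6_general (typeL : Bool) (R R' : GRD) (h : EndShift typeL R' R) :
    ∃ S T U : GRD, EndShift typeL R S ∧ Relation.ReflTransGen Commutation S T ∧
      Stab typeL U T ∧ CombEquiv U R' := by
  rcases endShift_iff.1 h with h | h
  · exact h.shiftCommuteDestab
  · exact h.shiftCommuteDestab.of_transpose

/-- the inverse of an end shift of type L is a combination of one end
shift of type L, finitely many commutations, and one destabilization of type L. -/
theorem statement6 (R R' : GRD) (h : EndShift true R' R) :
    ∃ S T U : GRD, EndShift true R S ∧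
      Relation.ReflTransGen (fun A B : GRD => Commutation A B ∨ CombEquiv A B) S T ∧
      Stab true U T ∧ CombEquiv U R' := by
  obtain ⟨S, T, U, hS, hST, hT, hU⟩ := statement6_general true R R' h
  exact ⟨S, T, U, hS, Relation.ReflTransGen.mono (fun _ _ => Or.inl) _ _ hST, hT, hU⟩

end RectDiag
end

section
/- If a generalized rectangular diagram R' is obtained from a generalized rectangular diagram R by an end shift of type L, then R' can be obtained from R by a finite sequence consisting of one vertex addition and one flype of type L. -/
namespace RectDiag

/-!
An end shift takes place inside one thin rectangle, in which `R` has exactly two vertices: the ends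
of a side. The vertex addition places a third vertex at another corner of that rectangle, and a
flype whose only vertex in `r₀₀` is a corner of the rectangle then carries a corner to the opposite
one. With the sign conventions of type L, the two corners exchanged are always the lower left and
the upper right one; shifts in the positive direction use the flype and those in the negative
direction its inverse.
-/

open Set Topology

lemma eventually_mem_Icc_of_mem_Icc {X α : Type*} [TopologicalSpace X] [TopologicalSpace α]
    [Preorder α] [OrderClosedTopology α] {l r : X → α} {x₀ : X} (hl : ContinuousAt l x₀)
    (hr : ContinuousAt r x₀) (s : Finset α) :
    ∀ᶠ x in 𝓝 x₀, ∀ p ∈ s, p ∈ Icc (l x) (r x) → p ∈ Icc (l x₀) (r x₀) := by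
  rw [Filter.eventually_all_finset]
  intro p _
  by_cases hlp : l x₀ ≤ p
  · by_cases hpr : p ≤ r x₀
    · exact .of_forall fun _ _ => ⟨hlp, hpr⟩
    · filter_upwards [hr.eventually (isClosed_Ici.isOpen_compl.mem_nhds hpr)] with x hx hp
      exact absurd hp.2 hx
  · filter_upwards [hl.eventually (isClosed_Iic.isOpen_compl.mem_nhds hlp)] with x hx hp
    exact absurd hp.1 hx

lemma exists_pos_mem_Icc_of_mem_Icc_expand (s : Finset (ℝ × ℝ)) (a b c d : ℝ) :
    ∃ δ > 0, ∀ p ∈ s, p ∈ Icc (a - δ, c - δ) (b + δ, d + δ) → p ∈ Icc (a, c) (b, d) := by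
  have hev : ∀ᶠ δ : ℝ in 𝓝 0,
      ∀ p ∈ s, p ∈ Icc (a - δ, c - δ) (b + δ, d + δ) → p ∈ Icc (a, c) (b, d) := by
    simpa only [sub_zero, add_zero] using eventually_mem_Icc_of_mem_Icc (x₀ := (0 : ℝ))
      (l := fun δ => (a - δ, c - δ)) (r := fun δ => (b + δ, d + δ))
      (by fun_prop) (by fun_prop) s
  obtain ⟨δ, hδ, hpos⟩ :=
    ((hev.filter_mono nhdsWithin_le_nhds).and (self_mem_nhdsWithin (s := Ioi 0))).exists
  exact ⟨δ, hpos, hδ⟩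

lemma image_update_id {α : Type*} [DecidableEq α] {s : Finset α} {v : α} (hv : v ∈ s) (w : α) :
    s.image (Function.update id v w) = insert w (s.erase v) := by
  rw [← Finset.insert_erase hv, Finset.image_insert, Function.update_self,
    Finset.erase_insert_eq_erase, Finset.erase_idem]
  congr 1
  rw [Finset.image_congr (g := id), Finset.image_id]
  exact fun p hp => Function.update_of_ne (Finset.ne_of_mem_erase hp) _ _

lemma combEquiv_refl (R : GRD) : CombEquiv R R :=
  ⟨id, id, strictMono_id, strictMono_id, by simp⟩

section Rectangle

variable {S : GRD} {a b c d : ℝ}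

lemma flypeLOnce_of_inter_Icc_eq (hab : a < b) (hcd : c < d)
    (hS : (S : Set (ℝ × ℝ)) ∩ Icc (a, c) (b, d) = {(a, c), (a, d), (b, c)}) :
    FlypeLOnce S (insert (b, d) (S.erase (a, c))) := by
  obtain ⟨δ, hδ, hexp⟩ := exists_pos_mem_Icc_of_mem_Icc_expand S a b c d
  obtain ⟨m, ham, hmb⟩ := exists_between hab
  obtain ⟨n, hcn, hnd⟩ := exists_between hcd
  have hmem : ∀ p ∈ ({(a, c), (a, d), (b, c)} : Set (ℝ × ℝ)), p ∈ S :=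
    fun p hp => (hS.symm.subset hp).1
  have hcorner : ∀ p ∈ S, inRect (a - δ) (b + δ) (c - δ) (d + δ) p →
      p = (a, c) ∨ p = (a, d) ∨ p = (b, c) := fun p hp hrect =>
    hS.subset ⟨hp, hexp p hp ⟨⟨hrect.1.le, hrect.2.2.1.le⟩, ⟨hrect.2.1.le, hrect.2.2.2.le⟩⟩⟩
  have h₀₀ : ∀ p ∈ S, inRect (a - δ) m (c - δ) n p → p = (a, c) := by grind [inRect]
  have h₀₁ : ∀ p ∈ S, inRect (a - δ) m n (d + δ) p → p = (a, d) := by grind [inRect]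
  have h₁₀ : ∀ p ∈ S, inRect m (b + δ) (c - δ) n p → p = (b, c) := by grind [inRect]
  have h₁₁ : ∀ p ∈ S, ¬ inRect m (b + δ) n (d + δ) p := by grind [inRect]
  refine ⟨a - δ, m, b + δ, c - δ, n, d + δ, by linarith, by linarith, by linarith, by linarith,
    h₁₁, fun p hp q hq hp' hq' hlt => ?_, fun p hp q hq hp' hq' hlt => ?_,
    Function.update id (a, c) (b, d), fun p _ hp' => ?_, fun p hp hp' => ?_,
    (image_update_id (hmem _ (by simp)) _).symm⟩
  · exact absurd hlt (by rw [h₀₁ p hp hp', h₀₁ q hq hq']; exact lt_irrefl _)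
  · exact absurd hlt (by rw [h₁₀ p hp hp', h₁₀ q hq hq']; exact lt_irrefl _)
  · refine Function.update_of_ne ?_ _ _
    rintro rfl
    exact hp' ⟨by simpa, ham, by simpa, hcn⟩
  · obtain rfl := h₀₀ p hp hp'
    exact ⟨(a, d), hmem _ (by simp), (b, c), hmem _ (by simp),
      ⟨by simpa, ham, hnd, by simpa⟩, rfl, ⟨hmb, by simpa, by simpa, hcn⟩, rfl,
      Function.update_self ..⟩

lemma flypeLOnce_insert_erase_of_inter_Icc_eq (hab : a < b) (hcd : c < d)
    (hS : (S : Set (ℝ × ℝ)) ∩ Icc (a, c) (b, d) = {(a, d), (b, c), (b, d)}) :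
    FlypeLOnce (insert (a, c) (S.erase (b, d))) S := by
  have hmem : ∀ p, p ∈ S ∧ p ∈ Icc (a, c) (b, d) ↔ p = (a, d) ∨ p = (b, c) ∨ p = (b, d) :=
    fun p => Set.ext_iff.mp hS p
  have hlowerLeft : (a, c) ∈ Icc (a, c) (b, d) := by simp [hab.le, hcd.le]
  have hac : (a, c) ∉ S := fun h => by
    have := (hmem (a, c)).1 ⟨h, hlowerLeft⟩
    simp [hab.ne, hcd.ne] at this
  have hbd : (b, d) ∈ S := ((hmem (b, d)).2 (by simp)).1
  have hcorners : ((insert (a, c) (S.erase (b, d)) : GRD) : Set (ℝ × ℝ)) ∩ Icc (a, c) (b, d) =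
      {(a, c), (a, d), (b, c)} := by
    rw [Finset.coe_insert, Finset.coe_erase, insert_inter_of_mem hlowerLeft,
      inter_comm, ← inter_sdiff_assoc, inter_comm, hS]
    ext p
    simp only [mem_insert_iff, mem_sdiff, mem_singleton_iff]
    grind
  convert flypeLOnce_of_inter_Icc_eq hab hcd hcorners using 1
  rw [Finset.erase_insert_eq_erase, Finset.erase_eq_of_notMem (by simp [hac]),
    Finset.insert_erase hbd]

end Rectangle

section VertexAddition

variable {R : GRD} {a b x y : ℝ}

lemma vertexAddition_of_fresh_column (ha : (a, y) ∈ R) (hx : ∀ w ∈ R, w.1 ≠ x) :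
    VertexAddition R (insert (x, y) R) :=
  ⟨(x, y), fun h => hx _ h rfl, rfl, .inr ⟨⟨_, ha, rfl⟩, hx⟩⟩

lemma vertexAddition_of_fresh_row (hb : (x, b) ∈ R) (hy : ∀ w ∈ R, w.2 ≠ y) :
    VertexAddition R (insert (x, y) R) :=
  ⟨(x, y), fun h => hy _ h rfl, rfl, .inl ⟨⟨_, hb, rfl⟩, hy⟩⟩

end VertexAddition

section Side

variable {R : GRD} {a b c d : ℝ} {v v' : ℝ × ℝ}

lemma mem_Icc_and_ne_of_mem_pair (hab : a < b) (hcd : c < d)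
    (hv : v ∈ ({(a, d), (b, c)} : Set (ℝ × ℝ))) :
    v ∈ Icc (a, c) (b, d) ∧ v ≠ (a, c) ∧ v ≠ (b, d) := by
  rcases hv with rfl | rfl <;> simp [hab.le, hab.ne, hab.ne', hcd.le, hcd.ne, hcd.ne']

lemma flypeL_insert_of_inter_Icc_eq_lowerLeft (hab : a < b) (hcd : c < d)
    (hR : (R : Set (ℝ × ℝ)) ∩ Icc (a, c) (b, d) = {(a, c), v})
    (hv : ({v, v'} : Set (ℝ × ℝ)) = {(a, d), (b, c)}) :
    FlypeL (insert v' R) (insert v' (insert (b, d) (R.erase (a, c)))) := by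
  have hv' : v' ∈ ({(a, d), (b, c)} : Set (ℝ × ℝ)) := hv.subset (by simp)
  obtain ⟨hrect, hne, -⟩ := mem_Icc_and_ne_of_mem_pair hab hcd hv'
  have hcorners : ((insert v' R : GRD) : Set (ℝ × ℝ)) ∩ Icc (a, c) (b, d) =
      {(a, c), (a, d), (b, c)} := by
    rw [Finset.coe_insert, insert_inter_of_mem hrect, hR, insert_comm, pair_comm, hv]
  rw [Finset.insert_comm, ← Finset.erase_insert_of_ne hne]
  exact .inl (flypeLOnce_of_inter_Icc_eq hab hcd hcorners)

lemma flypeL_insert_of_inter_Icc_eq_upperRight (hab : a < b) (hcd : c < d)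
    (hR : (R : Set (ℝ × ℝ)) ∩ Icc (a, c) (b, d) = {v, (b, d)})
    (hv : ({v, v'} : Set (ℝ × ℝ)) = {(a, d), (b, c)}) :
    FlypeL (insert v' R) (insert (a, c) (insert v' (R.erase (b, d)))) := by
  have hv' : v' ∈ ({(a, d), (b, c)} : Set (ℝ × ℝ)) := hv.subset (by simp)
  obtain ⟨hrect, -, hne⟩ := mem_Icc_and_ne_of_mem_pair hab hcd hv'
  have hcorners : ((insert v' R : GRD) : Set (ℝ × ℝ)) ∩ Icc (a, c) (b, d) =
      {(a, d), (b, c), (b, d)} := by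
    rw [Finset.coe_insert, insert_inter_of_mem hrect, hR, insert_comm]
    simpa only [insert_union, singleton_union] using congrArg (· ∪ {(b, d)}) hv
  rw [← Finset.erase_insert_of_ne hne]
  exact .inr (flypeLOnce_insert_erase_of_inter_Icc_eq hab hcd hcorners)

lemma inter_Icc_eq_pair_of_column {l r e y₁ y₂ : ℝ} (hle : l ≤ e) (her : e ≤ r) (hy : y₁ ≤ y₂)
    (h₁ : (e, y₁) ∈ R) (h₂ : (e, y₂) ∈ R) (hadj : ∀ t, (e, t) ∈ R → ¬ (y₁ < t ∧ t < y₂))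
    (hstrip : ∀ p ∈ R, l ≤ p.1 → p.1 ≤ r → p.1 = e) :
    (R : Set (ℝ × ℝ)) ∩ Icc (l, y₁) (r, y₂) = {(e, y₁), (e, y₂)} := by
  refine Subset.antisymm ?_ ?_
  · rintro ⟨x, t⟩ ⟨hp, ⟨hlx, hyt⟩, hxr, hty⟩
    obtain rfl : x = e := hstrip _ hp hlx hxr
    have := hadj t hp
    grind
  · rintro _ (rfl | rfl)
    · exact ⟨h₁, ⟨hle, le_rfl⟩, her, hy⟩
    · exact ⟨h₂, ⟨hle, hy⟩, her, le_rfl⟩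

lemma inter_Icc_eq_pair_of_row {l r e x₁ x₂ : ℝ} (hle : l ≤ e) (her : e ≤ r) (hx : x₁ ≤ x₂)
    (h₁ : (x₁, e) ∈ R) (h₂ : (x₂, e) ∈ R) (hadj : ∀ t, (t, e) ∈ R → ¬ (x₁ < t ∧ t < x₂))
    (hstrip : ∀ p ∈ R, l ≤ p.2 → p.2 ≤ r → p.2 = e) :
    (R : Set (ℝ × ℝ)) ∩ Icc (x₁, l) (x₂, r) = {(x₁, e), (x₂, e)} := by
  refine Subset.antisymm ?_ ?_
  · rintro ⟨t, y⟩ ⟨hp, ⟨hxt, hly⟩, htx, hyr⟩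
    obtain rfl : y = e := hstrip _ hp hly hyr
    have := hadj t hp
    grind
  · rintro _ (rfl | rfl)
    · exact ⟨h₁, ⟨le_rfl, hle⟩, hx, her⟩
    · exact ⟨h₂, ⟨hx, hle⟩, le_rfl, her⟩

end Side

/-- an end shift of type L is a combination of one vertex addition and
one flype of type L. -/
theorem statement9 (R R' : GRD) (h : EndShift true R R') :
    ∃ S T : GRD, VertexAddition R S ∧ FlypeL S T ∧ CombEquiv T R' := by
  rcases h with ⟨a, y₁, y₂, ε, hε, hy, h₁, h₂, hadj, ⟨hstrip, rfl⟩ | ⟨hstrip, rfl⟩⟩ |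
    ⟨a, x₁, x₂, ε, hε, hx, h₁, h₂, hadj, ⟨hstrip, rfl⟩ | ⟨hstrip, rfl⟩⟩
  · have hpair := inter_Icc_eq_pair_of_column (l := a) (r := a + ε)
      le_rfl (by linarith) hy.le h₁ h₂ hadj (by grind)
    exact ⟨_, _, vertexAddition_of_fresh_column h₁ (by grind),
      flypeL_insert_of_inter_Icc_eq_lowerLeft (by linarith) hy hpair rfl, combEquiv_refl _⟩
  · have hpair := inter_Icc_eq_pair_of_column (l := a - ε) (r := a)
      (by linarith) le_rfl hy.le h₁ h₂ hadj (by grind)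
    exact ⟨_, _, vertexAddition_of_fresh_column h₂ (by grind),
      flypeL_insert_of_inter_Icc_eq_upperRight (by linarith) hy hpair (pair_comm _ _),
      combEquiv_refl _⟩
  · have hpair := inter_Icc_eq_pair_of_row (l := a) (r := a + ε)
      le_rfl (by linarith) hx.le h₁ h₂ hadj (by grind)
    exact ⟨_, _, vertexAddition_of_fresh_row h₁ (by grind),
      flypeL_insert_of_inter_Icc_eq_lowerLeft hx (by linarith) hpair (pair_comm _ _),
      combEquiv_refl _⟩
  · have hpair := inter_Icc_eq_pair_of_row (l := a - ε) (r := a)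
      (by linarith) le_rfl hx.le h₁ h₂ hadj (by grind)
    exact ⟨_, _, vertexAddition_of_fresh_row h₂ (by grind),
      flypeL_insert_of_inter_Icc_eq_upperRight hx (by linarith) hpair rfl, combEquiv_refl _⟩

end RectDiag
end

section
/- For every generalized rectangular diagram R, the diagram obtained from R by reflection in the line x = y can be obtained from R by a finite sequence of elementary moves of type L. -/
/-!
Fix `M` with `x < y' + M` and `y < x' + M` for all vertices `(x, y)`, `(x', y')` of `R`. By vertex
additions, put a guide `(x, x + M)` into every column and a guide `(y + M, y)` into every row of
`R`. A vertex `(x, y)`, its two guides and the corner `(y + M, x + M)` span a rectangle; when the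
vertices are treated in order of decreasing `x + y`, this rectangle contains no other vertex of the
diagram, and then `(x, y)` can be carried to the opposite corner: by end shifts and commutations
the two edges at the vertex are pushed across the rectangle until only a small square at the
opposite corner is left, and a destabilization removes it. Afterwards every guide is the only
vertex on its column or row, so it can be shortened by commutations and removed by an end shift and
a destabilization. What remains is a translate of the reflection of `R`.

Moves of type L are preserved by the reflection, so results about columns also hold for rows.
-/

namespace RectDiag

open scoped Topology

open Set in
theorem exists_gap_right {α : Type*} [LinearOrder α] [DenselyOrdered α] (s : Finset α) {a b : α}
    (hab : a < b) : ∃ e ∈ Ioo a b, ∀ t ∈ s, t ∉ Ioc a e := by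
  induction s using Finset.induction_on with
  | empty => simpa using exists_between hab
  | insert t s _ ih =>
    obtain ⟨e, ⟨hae, heb⟩, hgap⟩ := ih
    rcases le_or_gt t a with hta | hat
    · exact ⟨e, ⟨hae, heb⟩, by grind⟩
    · obtain ⟨e', hae', he'⟩ := exists_between (lt_min hae hat)
      exact ⟨e', by grind, by grind⟩

open Set in
theorem exists_gap_left {α : Type*} [LinearOrder α] [DenselyOrdered α] (s : Finset α) {a b : α}
    (hab : a < b) : ∃ e ∈ Ioo a b, ∀ t ∈ s, t ∉ Ico e b := by
  obtain ⟨e, he, hgap⟩ := exists_gap_right (α := αᵒᵈ) s (a := b) (b := a) hab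
  exact ⟨e, ⟨he.2, he.1⟩, fun t ht h => hgap t ht ⟨h.2, h.1⟩⟩

/-- Subtracting a line of small positive slope keeps `f` monotone on the finite set; adding the
line back makes a monotone extension strictly monotone. -/
theorem exists_strictMono_eqOn {s : Finset ℝ} {f : ℝ → ℝ} (hf : StrictMonoOn f s) :
    ∃ g : ℝ → ℝ, StrictMono g ∧ Set.EqOn f g s := by
  obtain ⟨ε, hε, hslope⟩ :
      ∃ ε > 0, ∀ a ∈ s, ∀ b ∈ s, a < b → ε * (b - a) < f b - f a := by
    have hsmall : ∀ᶠ ε in 𝓝[>] (0 : ℝ), ∀ a ∈ s, ∀ b ∈ s, a < b → ε * (b - a) < f b - f a := by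
      simp only [Filter.eventually_all_finset, Filter.eventually_imp_distrib_left]
      intro a ha b hb hab
      have hlim : Filter.Tendsto (fun ε : ℝ => ε * (b - a)) (𝓝[>] 0) (𝓝 0) :=
        ((continuous_mul_const _).tendsto' 0 0 (zero_mul _)).mono_left nhdsWithin_le_nhds
      exact hlim.eventually_lt_const (sub_pos.2 (hf ha hb hab))
    exact (eventually_mem_nhdsWithin.and hsmall).exists
  have hmono : MonotoneOn (fun t => f t - ε * t) s := by
    intro a ha b hb hab
    rcases hab.eq_or_lt with rfl | hlt
    · exact le_rfl
    · linarith [hslope a ha b hb hlt]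
  have hfin := s.finite_toSet.image fun t => f t - ε * t
  obtain ⟨g, hg, hfg⟩ := hmono.exists_monotone_extension hfin.bddBelow hfin.bddAbove
  refine ⟨fun t => g t + ε * t, hg.add_strictMono (strictMono_mul_left_of_pos hε), ?_⟩
  intro t ht
  linarith [hfg ht]

/-- The reflection of a diagram in the line `x = y`. -/
noncomputable def reflect (R : GRD) : GRD := R.image Prod.swap

@[simp]
theorem mem_reflect {R : GRD} {p : ℝ × ℝ} : p ∈ reflect R ↔ p.swap ∈ R := by
  rw [reflect, Finset.mem_image]
  exact ⟨fun ⟨_, hq, h⟩ => h ▸ hq, fun h => ⟨_, h, p.swap_swap⟩⟩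

@[simp]
theorem reflect_reflect (R : GRD) : reflect (reflect R) = R := by
  ext; simp

@[simp]
theorem reflect_insert (p : ℝ × ℝ) (R : GRD) :
    reflect (insert p R) = insert p.swap (reflect R) :=
  Finset.image_insert ..

@[simp]
theorem reflect_union (R R' : GRD) : reflect (R ∪ R') = reflect R ∪ reflect R' :=
  Finset.image_union ..

@[simp]
theorem reflect_erase (R : GRD) (p : ℝ × ℝ) :
    reflect (R.erase p) = (reflect R).erase p.swap :=
  Finset.image_erase Prod.swap_injective ..

@[simp]
theorem reflect_product (S T : Finset ℝ) : reflect (S ×ˢ T) = T ×ˢ S :=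
  Finset.image_swap_product ..

theorem forall_mem_reflect {R : GRD} {P : ℝ × ℝ → Prop} :
    (∀ p ∈ reflect R, P p) ↔ ∀ p ∈ R, P p.swap :=
  Finset.forall_mem_image

theorem exists_mem_reflect {R : GRD} {P : ℝ × ℝ → Prop} :
    (∃ p ∈ reflect R, P p) ↔ ∃ p ∈ R, P p.swap :=
  Finset.exists_mem_image

theorem reflect_moveCol (R : GRD) (a b : ℝ) :
    reflect (moveCol R a b) = moveRow (reflect R) a b := by
  simp only [reflect, moveCol, moveRow, Finset.image_image]
  congr 1
  funext p
  simp only [Function.comp_apply, Prod.fst_swap, Prod.snd_swap]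
  split_ifs <;> rfl

theorem reflect_moveRow (R : GRD) (a b : ℝ) :
    reflect (moveRow R a b) = moveCol (reflect R) a b := by
  rw [← reflect_reflect (moveCol _ a b), reflect_moveCol, reflect_reflect]

theorem reflect_swapCols (R : GRD) (a b : ℝ) :
    reflect (swapCols R a b) = swapRows (reflect R) a b := by
  simp only [reflect, swapCols, swapRows, Finset.image_image]
  congr 1
  funext p
  simp only [Function.comp_apply, Prod.fst_swap, Prod.snd_swap]
  split_ifs <;> rfl

theorem reflect_swapRows (R : GRD) (a b : ℝ) :
    reflect (swapRows R a b) = swapCols (reflect R) a b := by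
  rw [← reflect_reflect (swapCols _ a b), reflect_swapCols, reflect_reflect]

section ReflectMoves

variable {typeL : Bool} {R R' : GRD}

theorem CombEquiv.reflect (h : CombEquiv R R') : CombEquiv (reflect R) (reflect R') := by
  obtain ⟨f, g, hf, hg, rfl⟩ := h
  refine ⟨g, f, hg, hf, ?_⟩
  simp only [RectDiag.reflect, Finset.image_image]
  rfl

theorem CyclicPermutation.reflect (h : CyclicPermutation R R') :
    CyclicPermutation (reflect R) (reflect R') := by
  rcases h with ⟨a, b, ha, hb, rfl⟩ | ⟨a, b, ha, hb, rfl⟩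
  · exact .inr ⟨a, b, exists_mem_reflect.2 ha,
      by simpa only [forall_mem_reflect, Prod.fst_swap, Prod.snd_swap] using hb, reflect_moveCol ..⟩
  · exact .inl ⟨a, b, exists_mem_reflect.2 ha,
      by simpa only [forall_mem_reflect, Prod.fst_swap, Prod.snd_swap] using hb, reflect_moveRow ..⟩

theorem Commutation.reflect (h : Commutation R R') : Commutation (reflect R) (reflect R') := by
  rcases h with ⟨a, b, hab, ha, hb, hgap, hI, rfl⟩ | ⟨a, b, hab, ha, hb, hgap, hI, rfl⟩
  · exact .inr ⟨a, b, hab, exists_mem_reflect.2 ha, exists_mem_reflect.2 hb,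
      forall_mem_reflect.2 hgap, by simpa only [mem_reflect, Prod.swap_prod_mk] using hI,
      reflect_swapCols ..⟩
  · exact .inl ⟨a, b, hab, exists_mem_reflect.2 ha, exists_mem_reflect.2 hb,
      forall_mem_reflect.2 hgap, by simpa only [mem_reflect, Prod.swap_prod_mk] using hI,
      reflect_swapRows ..⟩

theorem Stab.reflect (h : Stab typeL R R') : Stab typeL (reflect R) (reflect R') := by
  obtain ⟨x, y, x', y', hxy, hside, hx, hy, hx', hy', rfl⟩ := h
  refine ⟨y, x, y', x', mem_reflect.2 hxy, ?_, forall_mem_reflect.2 hy, forall_mem_reflect.2 hx,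
    forall_mem_reflect.2 hy', forall_mem_reflect.2 hx', ?_⟩
  · cases typeL <;> simp only [Bool.false_eq_true, if_true, if_false] at hside ⊢ <;> tauto
  · simp only [reflect_insert, reflect_erase, Prod.swap_prod_mk]
    exact Finset.insert_comm ..

theorem EndShift.reflect (h : EndShift typeL R R') : EndShift typeL (reflect R) (reflect R') := by
  rcases h with ⟨a, u, v, ε, hε, huv, hu, hv, hadj, h⟩ | ⟨a, u, v, ε, hε, huv, hu, hv, hadj, h⟩
  · refine .inr ⟨a, u, v, ε, hε, huv, mem_reflect.2 hu, mem_reflect.2 hv, ?_, ?_⟩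
    · simpa only [mem_reflect, Prod.swap_prod_mk] using hadj
    · rcases h with ⟨hgap, rfl⟩ | ⟨hgap, rfl⟩
      · exact .inl ⟨forall_mem_reflect.2 hgap, by simp⟩
      · exact .inr ⟨forall_mem_reflect.2 hgap, by simp⟩
  · refine .inl ⟨a, u, v, ε, hε, huv, mem_reflect.2 hu, mem_reflect.2 hv, ?_, ?_⟩
    · simpa only [mem_reflect, Prod.swap_prod_mk] using hadj
    · rcases h with ⟨hgap, rfl⟩ | ⟨hgap, rfl⟩
      · exact .inl ⟨forall_mem_reflect.2 hgap, by simp⟩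
      · exact .inr ⟨forall_mem_reflect.2 hgap, by simp⟩

theorem VertexAddition.reflect (h : VertexAddition R R') :
    VertexAddition (reflect R) (reflect R') := by
  obtain ⟨v, hv, rfl, h⟩ := h
  refine ⟨v.swap, by simpa using hv, reflect_insert .., ?_⟩
  exact h.symm.imp (.imp exists_mem_reflect.2 forall_mem_reflect.2)
    (.imp exists_mem_reflect.2 forall_mem_reflect.2)

theorem ElemMove.reflect : ElemMove typeL R R' → ElemMove typeL (reflect R) (reflect R') :=
  .imp .reflect <| .imp .reflect <| .imp .reflect <| .imp .reflect <| .imp .reflect .reflect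

theorem Step.reflect : Step typeL R R' → Step typeL (reflect R) (reflect R') :=
  .imp .reflect .reflect

end ReflectMoves

/-- `Reachable typeL R R'`: the diagram `R'` is obtained from `R` by finitely many elementary
moves of the given type, up to combinatorial equivalence. -/
abbrev Reachable (typeL : Bool) : GRD → GRD → Prop := Relation.ReflTransGen (Step typeL)

theorem Reachable.reflect {typeL : Bool} {R R' : GRD} (h : Reachable typeL R R') :
    Reachable typeL (reflect R) (reflect R') :=
  Relation.ReflTransGen.lift RectDiag.reflect (fun _ _ => Step.reflect) _ _ h

section ReachableMoves

variable {typeL : Bool} {R R' : GRD}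

theorem CombEquiv.reachable (h : CombEquiv R R') : Reachable typeL R R' :=
  .single (.inr h)

theorem Commutation.reachable (h : Commutation R R') : Reachable typeL R R' :=
  .single (.inl (.inr (.inl h)))

theorem Stab.reachable_symm (h : Stab typeL R R') : Reachable typeL R' R :=
  .single (.inl (.inr (.inr (.inr (.inl h)))))

theorem EndShift.reachable (h : EndShift typeL R R') : Reachable typeL R R' :=
  .single (.inl (.inr (.inr (.inr (.inr (.inl h))))))

theorem VertexAddition.reachable (h : VertexAddition R R') : Reachable typeL R R' :=
  .single (.inl (.inr (.inr (.inr (.inr (.inr h))))))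

end ReachableMoves

section SlideEdge

variable {typeL : Bool} {B R : GRD} {S : Finset ℝ} {b c d : ℝ}

theorem mem_moveCol {p : ℝ × ℝ} :
    p ∈ moveCol R c d ↔ (p ∈ R ∧ p.1 ≠ c) ∨ (p.1 = d ∧ (c, p.2) ∈ R) := by
  obtain ⟨x, y⟩ := p
  simp only [moveCol, Finset.mem_image, Prod.exists]
  grind

theorem combEquiv_moveCol (hcd : c < d) (hgap : ∀ p ∈ R, p.1 ∉ Set.Ioc c d) :
    CombEquiv R (moveCol R c d) := by
  have hmono : StrictMonoOn (Function.update id c d) (R.image Prod.fst : Finset ℝ) := by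
    simp only [StrictMonoOn, Finset.coe_image, Set.forall_mem_image, Finset.mem_coe]
    intro p hp q hq hpq
    simp only [Function.update_apply, id]
    grind [hgap p hp, hgap q hq]
  obtain ⟨f, hf, hfR⟩ := exists_strictMono_eqOn hmono
  refine ⟨f, id, hf, strictMono_id, Finset.image_congr fun p hp => ?_⟩
  have hfp := hfR (Finset.mem_coe.2 (Finset.mem_image_of_mem Prod.fst hp))
  simp only [Function.update_apply, id] at hfp
  grind

theorem reachable_commute_next (hS : S.Nonempty) (hcb : c < b) (hc : ∀ p ∈ B, p.1 ≠ c)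
    (hb : ∃ p ∈ B, p.1 = b) (hgap : ∀ p ∈ B, p.1 ∉ Set.Ioo c b)
    (hI : ¬ Interleave (· ∈ S) fun y => (b, y) ∈ B) :
    Reachable typeL ({c} ×ˢ S ∪ B) ({b} ×ˢ S ∪ moveCol B b c) := by
  obtain ⟨y, hy⟩ := hS
  obtain ⟨q, hq, hqb⟩ := hb
  refine Commutation.reachable <| .inl
    ⟨c, b, hcb, ⟨(c, y), by simp [hy], rfl⟩, ⟨q, by simp [hq], hqb⟩, ?_, ?_, ?_⟩
  · grind
  · convert hI using 2
    · grind
    · grind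
  · ext ⟨x, z⟩
    simp only [swapCols, Finset.mem_union, Finset.mem_image, Finset.mem_product, mem_moveCol]
    grind

theorem combEquiv_slideCol (hcd : c < d) (hgap : ∀ p ∈ B, p.1 ∉ Set.Icc c d) :
    CombEquiv ({c} ×ˢ S ∪ B) ({d} ×ˢ S ∪ B) := by
  have hmove : moveCol ({c} ×ˢ S ∪ B) c d = {d} ×ˢ S ∪ B := by
    ext ⟨x, y⟩
    simp only [mem_moveCol, Finset.mem_union, Finset.mem_product, Finset.mem_singleton]
    grind
  rw [← hmove]
  refine combEquiv_moveCol hcd ?_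
  grind

theorem combEquiv_moveCol_back (hcb : c < b) (hbd : b < d) (hgap : ∀ p ∈ B, p.1 ∉ Set.Ico c b) :
    CombEquiv ({d} ×ˢ S ∪ moveCol B b c) ({d} ×ˢ S ∪ B) := by
  have hmove : moveCol ({d} ×ˢ S ∪ moveCol B b c) c b = {d} ×ˢ S ∪ B := by
    ext ⟨x, y⟩
    simp only [mem_moveCol, Finset.mem_union, Finset.mem_product, Finset.mem_singleton]
    grind
  rw [← hmove]
  refine combEquiv_moveCol hcb fun p hp => ?_
  simp only [Finset.mem_union, Finset.mem_product, Finset.mem_singleton, mem_moveCol] at hp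
  grind

theorem mem_moveCol_of_lt (hcb : c < b) {p : ℝ × ℝ} (hp : b < p.1) :
    p ∈ moveCol B b c ↔ p ∈ B := by
  simp only [mem_moveCol, hp.ne', (hcb.trans hp).ne', ne_eq, not_false_eq_true, and_true,
    false_and, or_false]

/-- Induction on the part of `B` over the strip `(c, d)`: the edge commutes with the nearest
column of the strip, and once it has arrived at `d` that column returns to its place. -/
theorem reachable_slideCol (hcd : c < d) (hc : ∀ p ∈ B, p.1 ≠ c) (hd : ∀ p ∈ B, p.1 ≠ d)
    (hI : ∀ b ∈ Set.Ioo c d, ¬ Interleave (· ∈ S) fun y => (b, y) ∈ B) :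
    Reachable typeL ({c} ×ˢ S ∪ B) ({d} ×ˢ S ∪ B) := by
  rcases S.eq_empty_or_nonempty with rfl | hS
  · simpa using .refl
  induction hn : (B.filter fun p => p.1 ∈ Set.Ioo c d) using Finset.strongInduction
    generalizing B c with | _ strip ih
  subst hn
  rcases (B.filter fun p => p.1 ∈ Set.Ioo c d).eq_empty_or_nonempty with hempty | hne
  · rw [Finset.filter_eq_empty_iff] at hempty
    clear ih
    exact (combEquiv_slideCol hcd (by grind)).reachable
  obtain ⟨q, hq, hqmin⟩ := Finset.exists_min_image _ Prod.fst hne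
  obtain ⟨hqB, hcq, hqd⟩ := Finset.mem_filter.1 hq
  have hgap : ∀ p ∈ B, p.1 ∉ Set.Ico c q.1 := fun p hp ⟨hcp, hpq⟩ =>
    (hqmin p (Finset.mem_filter.2
      ⟨hp, hcp.lt_of_ne (hc p hp).symm, hpq.trans hqd⟩)).not_gt hpq
  have hcommute := reachable_commute_next (typeL := typeL) hS hcq hc ⟨q, hqB, rfl⟩
    (fun p hp h => hgap p hp (Set.Ioo_subset_Ico_self h)) (hI _ ⟨hcq, hqd⟩)
  have hslide : Reachable typeL ({q.1} ×ˢ S ∪ moveCol B q.1 c)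
      ({d} ×ˢ S ∪ moveCol B q.1 c) := by
    refine ih _ ?_ hqd ?_ ?_ ?_ rfl
    · clear ih
      refine Finset.ssubset_iff_of_subset ?_ |>.2 ⟨q, hq, by grind⟩
      intro p hp
      grind [mem_moveCol_of_lt hcq]
    · clear ih
      grind [mem_moveCol]
    · clear ih
      grind [mem_moveCol]
    · intro b hb
      simpa only [mem_moveCol_of_lt hcq (p := (b, _)) hb.1] using hI b ⟨hcq.trans hb.1, hb.2⟩
  exact (hcommute.trans hslide).trans (combEquiv_moveCol_back hcq hqd hgap).reachable

end SlideEdge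

theorem not_interleave_singleton (a : ℝ) (A : ℝ → Prop) :
    ¬ Interleave (· ∈ ({a} : Finset ℝ)) A := by
  simp only [Interleave, Finset.mem_singleton]
  grind

theorem not_interleave_pair {y₁ y₂ : ℝ} {A : ℝ → Prop} (hy : y₁ < y₂)
    (hA : ∀ y ∈ Set.Ioo y₁ y₂, ¬ A y) : ¬ Interleave (· ∈ ({y₁, y₂} : Finset ℝ)) A := by
  simp only [Interleave, Finset.mem_insert, Finset.mem_singleton]
  grind

theorem stab_lowerLeft {B : GRD} {x y x' y' : ℝ} (hxy : (x, y) ∈ B) (hx : x' < x) (hy : y' < y)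
    (hcol : ∀ p ∈ B, p.1 ∉ Set.Ico x' x) (hrow : ∀ p ∈ B, p.2 ∉ Set.Ico y' y) :
    Stab true B (insert (x', y) (insert (x, y') (insert (x', y') (B.erase (x, y))))) := by
  refine ⟨x, y, x', y', hxy, .inr ⟨hx, hy⟩, ?_, ?_, ?_, ?_, rfl⟩ <;>
    grind [strictlyBetween]

section EndShiftLeaf

variable {B : GRD}

theorem endShift_right {a e y₁ y₂ : ℝ} (hae : a < e) (hy : y₁ < y₂) (h₁ : (a, y₁) ∉ B)
    (h₂ : (a, y₂) ∈ B) (hadj : ∀ p ∈ B, p.1 = a → p.2 ∉ Set.Ioo y₁ y₂)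
    (hgap : ∀ p ∈ B, p.1 ∉ Set.Ioc a e) :
    EndShift true (insert (a, y₁) B) (({e} : Finset ℝ) ×ˢ {y₁, y₂} ∪ B) := by
  refine .inl ⟨a, y₁, y₂, e - a, sub_pos.2 hae, hy, Finset.mem_insert_self .., by simp [h₂], ?_,
    .inl ⟨?_, ?_⟩⟩
  · grind
  · grind
  · rw [if_pos rfl, add_sub_cancel, Finset.erase_insert h₁]
    ext ⟨x, y⟩
    simp only [Finset.mem_union, Finset.mem_product, Finset.mem_insert, Finset.mem_singleton]
    grind

theorem reachable_endShift_right {a d y₁ y₂ : ℝ} (had : a < d) (hy : y₁ < y₂)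
    (h₁ : (a, y₁) ∉ B) (h₂ : (a, y₂) ∈ B) (hd : ∀ p ∈ B, p.1 ≠ d)
    (hempty : ∀ p ∈ B, p.1 ∈ Set.Ico a d → p.2 ∉ Set.Ioo y₁ y₂) :
    Reachable true (insert (a, y₁) B) (({d} : Finset ℝ) ×ˢ {y₁, y₂} ∪ B) := by
  obtain ⟨e, ⟨hae, hed⟩, hgap⟩ := exists_gap_right (B.image Prod.fst) had
  simp only [Finset.forall_mem_image] at hgap
  have hshift := endShift_right hae hy h₁ h₂ (fun p hp h => hempty p hp (by grind)) hgap
  refine hshift.reachable.trans ?_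
  refine reachable_slideCol hed (fun p hp h => hgap hp ⟨h ▸ hae, h.le⟩) hd fun b hb => ?_
  exact not_interleave_pair hy fun y hy' hb' => hempty _ hb' ⟨(hae.trans hb.1).le, hb.2⟩ hy'

theorem reachable_endShift_up {a d x₁ x₂ : ℝ} (had : a < d) (hx : x₁ < x₂)
    (h₁ : (x₁, a) ∉ B) (h₂ : (x₂, a) ∈ B) (hd : ∀ p ∈ B, p.2 ≠ d)
    (hempty : ∀ p ∈ B, p.2 ∈ Set.Ico a d → p.1 ∉ Set.Ioo x₁ x₂) :
    Reachable true (insert (x₁, a) B) (({x₁, x₂} : Finset ℝ) ×ˢ {d} ∪ B) := by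
  have h := (reachable_endShift_right (B := reflect B) had hx (by simpa using h₁)
    (by simpa using h₂) (forall_mem_reflect.2 hd) (forall_mem_reflect.2 hempty)).reflect
  simpa only [reflect_insert, reflect_union, reflect_product, reflect_reflect,
    Prod.swap_prod_mk] using h

theorem reachable_oppositeCorner {v w : ℝ × ℝ} (h₁ : v.1 < w.1) (h₂ : v.2 < w.2)
    (hul : (v.1, w.2) ∈ B) (hlr : (w.1, v.2) ∈ B)
    (hempty : ∀ p ∈ B, p ∈ Set.Icc v w → p = (v.1, w.2) ∨ p = (w.1, v.2)) :
    Reachable true (insert v B) (insert w B) := by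
  obtain ⟨x₁, y₁⟩ := v
  obtain ⟨x₂, y₂⟩ := w
  simp only [Set.mem_Icc, Prod.le_def] at h₁ h₂ hul hlr hempty
  obtain ⟨d, ⟨hx₁d, hdx₂⟩, hcol⟩ := exists_gap_left (B.image Prod.fst) h₁
  obtain ⟨g, ⟨hy₁g, hgy₂⟩, hrow⟩ := exists_gap_left (B.image Prod.snd) h₂
  simp only [Finset.forall_mem_image] at hcol hrow
  have hd : ∀ p ∈ B, p.1 ≠ d := fun p hp h => hcol hp ⟨h.ge, h.trans_lt hdx₂⟩
  have hg : ∀ p ∈ B, p.2 ≠ g := fun p hp h => hrow hp ⟨h.ge, h.trans_lt hgy₂⟩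
  have hv : (x₁, y₁) ∉ B := by grind
  have hw : (x₂, y₂) ∉ B := by grind
  have hright : Reachable true (insert (x₁, y₁) B) (insert (d, y₁) (insert (d, y₂) B)) := by
    have h := reachable_endShift_right hx₁d h₂ hv hul hd (by grind)
    simpa only [Finset.singleton_product, Finset.map_insert, Finset.map_singleton,
      Function.Embedding.coeFn_mk, Finset.insert_union, Finset.singleton_union] using h
  have hup : Reachable true (insert (d, y₁) (insert (d, y₂) B))
      (({d, x₂} : Finset ℝ) ×ˢ {g} ∪ insert (d, y₂) B) :=
    reachable_endShift_up hy₁g hdx₂ (by grind) (Finset.mem_insert_of_mem hlr)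
      (Finset.forall_mem_insert _ _ _ |>.2 ⟨hgy₂.ne', hg⟩) (by grind)
  refine (hright.trans hup).trans (Stab.reachable_symm ?_)
  convert stab_lowerLeft (B := insert (x₂, y₂) B) (Finset.mem_insert_self ..) hdx₂ hgy₂
    (by grind) (by grind) using 1
  rw [Finset.erase_insert hw]
  ext ⟨x, y⟩
  simp only [Finset.mem_union, Finset.mem_product, Finset.mem_insert, Finset.mem_singleton]
  grind

theorem reachable_leaf {x : ℝ} {p : ℝ × ℝ} (hx : ∀ q ∈ B, q.1 ≠ x) (hp : p ∈ B) (hxp : x < p.1) :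
    Reachable true (insert (x, p.2) B) B := by
  obtain ⟨z, a⟩ := p
  obtain ⟨d, ⟨hxd, hdz⟩, hcol⟩ := exists_gap_left (B.image Prod.fst) hxp
  obtain ⟨c, hca⟩ := exists_lt a
  obtain ⟨e, ⟨-, hea⟩, hrow⟩ := exists_gap_left (B.image Prod.snd) hca
  simp only [Finset.forall_mem_image] at hcol hrow
  have hslide : Reachable true (insert (x, a) B) (insert (d, a) B) :=
    reachable_slideCol (S := {a}) hxd hx (by grind) fun _ _ => not_interleave_singleton _ _
  have hshift : EndShift true (insert (d, a) B)
      (insert (d, a) (insert (z, e) (insert (d, e) (B.erase (z, a))))) := by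
    refine .inr ⟨a, d, z, a - e, sub_pos.2 hea, hdz, Finset.mem_insert_self .., by simp [hp], ?_,
      .inr ⟨?_, ?_⟩⟩
    · grind
    · grind
    · rw [if_pos rfl, sub_sub_cancel, Finset.erase_insert_of_ne (by grind)]
      grind
  have hstab := stab_lowerLeft hp hdz hea hcol hrow
  exact (hslide.trans hshift.reachable).trans hstab.reachable_symm

end EndShiftLeaf

/-- The points `(x, α x)` with `x ∈ S`. Such points serve as guides: the corner opposite to a
vertex is located by one guide in its column and one guide in its row. -/
noncomputable def graphOn (α : ℝ → ℝ) (S : Finset ℝ) : GRD := S.image fun x => (x, α x)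

section Guides

variable {α β : ℝ → ℝ} {S : Finset ℝ} {R B : GRD} {p : ℝ × ℝ}

theorem mem_graphOn : p ∈ graphOn α S ↔ p.1 ∈ S ∧ p.2 = α p.1 := by
  obtain ⟨x, y⟩ := p
  simp only [graphOn, Finset.mem_image, Prod.mk.injEq]
  grind

theorem forall_mem_graphOn {P : ℝ × ℝ → Prop} :
    (∀ p ∈ graphOn α S, P p) ↔ ∀ x ∈ S, P (x, α x) :=
  Finset.forall_mem_image

theorem graphOn_insert (α : ℝ → ℝ) (x : ℝ) (S : Finset ℝ) :
    graphOn α (insert x S) = insert (x, α x) (graphOn α S) :=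
  Finset.image_insert ..

theorem reachable_graphOn_union {typeL : Bool} (hα : Function.Injective α)
    (hS : ∀ x ∈ S, ∃ p ∈ R, p.1 = x) (hfresh : ∀ x ∈ S, ∀ p ∈ R, p.2 ≠ α x) :
    Reachable typeL R (graphOn α S ∪ R) := by
  induction S using Finset.induction_on with
  | empty => simpa [graphOn] using .refl
  | insert x S hx ih =>
    simp only [Finset.forall_mem_insert] at hS hfresh
    refine (ih hS.2 hfresh.2).trans (VertexAddition.reachable ?_)
    obtain ⟨⟨p, hp, hpx⟩, -⟩ := hS
    have hrow : ∀ q ∈ graphOn α S ∪ R, q.2 ≠ α x := by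
      intro q hq hqx
      rcases Finset.mem_union.1 hq with hq | hq
      · obtain ⟨hqS, hqα⟩ := mem_graphOn.1 hq
        exact hx (hα (hqα.symm.trans hqx) ▸ hqS)
      · exact hfresh.1 q hq hqx
    exact ⟨(x, α x), fun h => hrow _ h rfl, by rw [graphOn_insert, Finset.insert_union],
      .inl ⟨⟨p, Finset.mem_union_right _ hp, hpx⟩, hrow⟩⟩

theorem reachable_of_graphOn_union (hcol : ∀ x ∈ S, ∀ p ∈ B, p.1 ≠ x)
    (hrow : ∀ x ∈ S, ∃ p ∈ B, p.2 = α x ∧ x < p.1) :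
    Reachable true (graphOn α S ∪ B) B := by
  induction S using Finset.induction_on with
  | empty => simpa [graphOn] using .refl
  | insert x S hx ih =>
    simp only [Finset.forall_mem_insert] at hcol hrow
    obtain ⟨⟨p, hp, hpα, hxp⟩, hrowS⟩ := hrow
    have hleaf : Reachable true (insert (x, p.2) (graphOn α S ∪ B)) (graphOn α S ∪ B) := by
      refine reachable_leaf (fun q hq hqx => ?_) (Finset.mem_union_right _ hp) hxp
      rcases Finset.mem_union.1 hq with hq | hq
      · exact hx (hqx ▸ (mem_graphOn.1 hq).1)
      · exact hcol.1 q hq hqx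
    rw [graphOn_insert, Finset.insert_union, ← hpα]
    exact hleaf.trans (ih hcol.2 hrowS)

theorem reachable_flype (hα : StrictMono α) (hβ : StrictMono β)
    (hR : ∀ p ∈ R, p.1 < β p.2 ∧ p.2 < α p.1)
    (hguides : ∀ p ∈ R, (p.1, α p.1) ∈ B ∧ (β p.2, p.2) ∈ B)
    (hempty : ∀ p ∈ R, ∀ q ∈ B, q ∈ Set.Icc p (β p.2, α p.1) →
      q = (p.1, α p.1) ∨ q = (β p.2, p.2)) :
    Reachable true (R ∪ B) ((R.image fun p => (β p.2, α p.1)) ∪ B) := by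
  -- Moving the vertices with the largest `x + y` first, no other vertex gets in the way.
  induction R using Finset.induction_on_max_value (fun p : ℝ × ℝ => p.1 + p.2)
    generalizing B with
  | empty => simpa using .refl
  | insert s R hs hmax ih =>
    simp only [Finset.forall_mem_insert] at hR hguides hempty
    have hnot_le : ∀ p ∈ R, ¬ s ≤ p := by
      rintro p hp ⟨h₁, h₂⟩
      have hsum := hmax p hp
      have hps : p = s := Prod.ext (by linarith) (by linarith)
      exact hs (hps ▸ hp)
    have hmove : Reachable true (insert s (R ∪ B)) (insert (β s.2, α s.1) (R ∪ B)) := by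
      refine reachable_oppositeCorner hR.1.1 hR.1.2 (Finset.mem_union_right _ hguides.1.1)
        (Finset.mem_union_right _ hguides.1.2) fun q hq hqs => ?_
      rcases Finset.mem_union.1 hq with hq | hq
      · exact absurd hqs.1 (hnot_le q hq)
      · exact hempty.1 q hq hqs
    have hrest := ih (B := insert (β s.2, α s.1) B) hR.2
      (fun p hp => (hguides.2 p hp).imp Finset.mem_insert_of_mem Finset.mem_insert_of_mem) <| by
        intro p hp q hq hqp
        rcases Finset.mem_insert.1 hq with rfl | hq
        · exact absurd ⟨hα.le_iff_le.1 hqp.2.2, hβ.le_iff_le.1 hqp.2.1⟩ (hnot_le p hp)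
        · exact hempty.2 p hp q hq hqp
    rw [Finset.union_insert, Finset.union_insert] at hrest
    rw [Finset.insert_union, Finset.image_insert, Finset.insert_union]
    exact hmove.trans hrest

/-- The guides of a diagram `R`: the points `(x, α x)` in its columns together with the points
`(β y, y)` in its rows. -/
noncomputable def guides (α β : ℝ → ℝ) (R : GRD) : GRD :=
  graphOn α (R.image Prod.fst) ∪ reflect (graphOn β (R.image Prod.snd))

theorem forall_mem_guides {P : ℝ × ℝ → Prop} :
    (∀ q ∈ guides α β R, P q) ↔ (∀ p ∈ R, P (p.1, α p.1)) ∧ ∀ p ∈ R, P (β p.2, p.2) := by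
  simp only [guides, Finset.forall_mem_union, forall_mem_reflect, forall_mem_graphOn,
    Finset.forall_mem_image, Prod.swap_prod_mk]

theorem reachable_guides_union {typeL : Bool} (hα : Function.Injective α)
    (hβ : Function.Injective β) (hR : ∀ p ∈ R, ∀ q ∈ R, p.1 < β q.2 ∧ p.2 < α q.1) :
    Reachable typeL R (guides α β R ∪ R) := by
  set C := graphOn α (R.image Prod.fst) with hC
  have hcols : Reachable typeL R (C ∪ R) := by
    refine reachable_graphOn_union hα ?_ ?_ <;> simp only [Finset.forall_mem_image]
    · exact fun p hp => ⟨p, hp, rfl⟩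
    · exact fun p hp q hq => (hR q hq p hp).2.ne
  have hrows : Reachable typeL (reflect (C ∪ R))
      (graphOn β (R.image Prod.snd) ∪ reflect (C ∪ R)) := by
    refine reachable_graphOn_union hβ ?_ ?_ <;>
      simp only [Finset.forall_mem_image, exists_mem_reflect, forall_mem_reflect, hC,
        Finset.forall_mem_union, forall_mem_graphOn, Prod.fst_swap, Prod.snd_swap]
    · exact fun p hp => ⟨p, Finset.mem_union_right _ hp, rfl⟩
    · exact fun p hp => ⟨fun q hq => (hR q hq p hp).1.ne, fun q hq => (hR q hq p hp).1.ne⟩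
  have hadd := hrows.reflect
  rw [reflect_reflect, reflect_union (graphOn _ _), reflect_reflect, Finset.union_left_comm,
    ← Finset.union_assoc] at hadd
  exact hcols.trans hadd

theorem reachable_of_guides_union (hR : ∀ p ∈ R, ∀ q ∈ R, p.1 < β q.2 ∧ p.2 < α q.1) :
    Reachable true (guides α β R ∪ R.image fun p => (β p.2, α p.1))
      (R.image fun p => (β p.2, α p.1)) := by
  set R' := R.image fun p => (β p.2, α p.1) with hR'
  set D := graphOn β (R.image Prod.snd) with hD
  have hcols : Reachable true (graphOn α (R.image Prod.fst) ∪ (reflect D ∪ R'))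
      (reflect D ∪ R') := by
    refine reachable_of_graphOn_union ?_ ?_ <;>
      simp only [Finset.forall_mem_image, Finset.forall_mem_union, forall_mem_reflect,
        forall_mem_graphOn, hR', hD, Prod.fst_swap]
    · exact fun p hp => ⟨fun q hq => (hR p hp q hq).1.ne', fun q hq => (hR p hp q hq).1.ne'⟩
    · exact fun p hp => ⟨(β p.2, α p.1),
        Finset.mem_union_right _ (Finset.mem_image_of_mem _ hp), rfl, (hR p hp p hp).1⟩
  have hrows : Reachable true (D ∪ reflect R') (reflect R') := by
    refine reachable_of_graphOn_union ?_ ?_ <;>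
      simp only [Finset.forall_mem_image, forall_mem_reflect, exists_mem_reflect, hR',
        Finset.exists_mem_image, Prod.fst_swap, Prod.snd_swap]
    · exact fun p hp q hq => (hR p hp q hq).2.ne'
    · exact fun p hp => ⟨p, hp, rfl, (hR p hp p hp).2⟩
  have hremove := hrows.reflect
  rw [reflect_union, reflect_reflect] at hremove
  rw [guides, Finset.union_assoc]
  exact hcols.trans hremove

theorem reachable_image_of_lt (hα : StrictMono α) (hβ : StrictMono β)
    (hR : ∀ p ∈ R, ∀ q ∈ R, p.1 < β q.2 ∧ p.2 < α q.1) :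
    Reachable true R (R.image fun p => (β p.2, α p.1)) := by
  have hguides : ∀ p ∈ R, (p.1, α p.1) ∈ guides α β R ∧ (β p.2, p.2) ∈ guides α β R :=
    fun p hp => (forall_mem_guides.1 fun _ => id).imp (· p hp) (· p hp)
  have hempty : ∀ p ∈ R, ∀ q ∈ guides α β R, q ∈ Set.Icc p (β p.2, α p.1) →
      q = (p.1, α p.1) ∨ q = (β p.2, p.2) := by
    refine fun p _ => forall_mem_guides.2 ⟨fun q _ h => .inl ?_, fun q _ h => .inr ?_⟩
    · rw [(hα.le_iff_le.1 h.2.2).antisymm h.1.1]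
    · rw [(hβ.le_iff_le.1 h.2.1).antisymm h.1.2]
  have hflype := reachable_flype hα hβ (fun p hp => hR p hp p hp) hguides hempty
  rw [Finset.union_comm, Finset.union_comm (R.image _)] at hflype
  exact (reachable_guides_union hα.injective hβ.injective hR).trans
    (hflype.trans (reachable_of_guides_union hR))

end Guides

theorem exists_forall_lt_add (R : GRD) :
    ∃ M : ℝ, ∀ p ∈ R, ∀ q ∈ R, p.1 < q.2 + M ∧ p.2 < q.1 + M := by
  have h : ∀ᶠ M : ℝ in Filter.atTop, ∀ p ∈ R, ∀ q ∈ R, p.1 < q.2 + M ∧ p.2 < q.1 + M := by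
    simp only [Filter.eventually_all_finset, ← sub_lt_iff_lt_add']
    exact fun p _ q _ => (Filter.eventually_gt_atTop _).and (Filter.eventually_gt_atTop _)
  exact h.exists

theorem combEquiv_translate (R : GRD) (a b : ℝ) :
    CombEquiv R (R.image fun p => (p.1 + a, p.2 + b)) :=
  ⟨(· + a), (· + b), add_left_strictMono, add_left_strictMono, rfl⟩

/-- the reflection of a generalized rectangular diagram in the line
`x = y` can be obtained from it by a finite sequence of elementary moves of type L. -/
theorem statement13 (R : GRD) :
    Relation.ReflTransGen (Step true) R (R.image fun p => (p.2, p.1)) := by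
  obtain ⟨M, hM⟩ := exists_forall_lt_add R
  have hshift : StrictMono (· + M) := add_left_strictMono
  have hreach := reachable_image_of_lt hshift hshift hM
  have hback := combEquiv_translate (R.image fun p => (p.2 + M, p.1 + M)) (-M) (-M)
  simp only [Finset.image_image, Function.comp_def, add_neg_cancel_right] at hback
  exact hreach.trans hback.reachable

end RectDiag
end
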